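/- arXiv:1809.08206 — 4 statements merged into one kernel-verified Lean document; each statement's English description precedes it below -/
import Mathlib

section
/- Let x_1 < x_2 < ... < x_N (N > 2) be real numbers, I = [x_1, x_N], and for i = 1,...,N−1 let L_i : I → [x_i, x_{i+1}] be the affine map with L_i(x_1) = x_i, L_i(x_N) = x_{i+1}. Let F_i : I × ℝ → ℝ be continuous maps with F_i(x_1, y_1) = y_i, F_i(x_N, y_N) = y_{i+1}, and |F_i(x,y) − F_i(x,y*)| ≤ r_i |y − y*| for all x ∈ I and y, y* ∈ ℝ, where 0 < r_i < 1. Then the Read–Bajraktarević operator T, defined on the set G = {h ∈ C(I,ℝ) : h(x_1) = y_1, h(x_N) = y_N} by (Th)(x) = F_i(L_i^{-1}(x), h(L_i^{-1}(x))) for x ∈ [x_i, x_{i+1}], maps G into G and is a contraction with respect to the supremum metric with contraction factor r* = max{r_i : 1 ≤ i ≤ N−1} < 1. -/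
/-!
A function `h` with `h (L i t) = F i t (g t)` is continuous on each `L i '' I`, since a continuous
map from a compact space onto a Hausdorff one is a quotient map. These finitely many closed images
cover `I`: by the intermediate value theorem `L i '' I` contains `[x i, x (i + 1)]`. Evaluating two
such functions at the same `t = L i s` and using the Lipschitz bound on `F i s` gives the
contraction estimate.
-/

open Set

/-- The space `G` of the Read–Bajraktarević operator: functions continuous on `[a, b]` with
prescribed values at the endpoints. Functions are total, but only their restrictions to `[a, b]`
matter. -/
def interpolants {α Y : Type*} [Preorder α] [TopologicalSpace α] [TopologicalSpace Y]
    (a b : α) (p q : Y) : Set (α → Y) :=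
  {g | ContinuousOn g (Icc a b) ∧ g a = p ∧ g b = q}

/-- The functional equation defining the Read–Bajraktarević operator: `h` is an image of `g` under
the operator with base maps `L i` and fibre maps `F i`, for `i ∈ s`. The equation is evaluated at
`L i t`, which avoids naming an inverse of `L i`. -/
def IsReadBajraktarevicImage {ι X X' Y Y' : Type*} (s : Set ι) (K : Set X) (L : ι → X → X')
    (F : ι → X → Y → Y') (g : X → Y) (h : X' → Y') : Prop :=
  ∀ i ∈ s, ∀ t ∈ K, h (L i t) = F i t (g t)

theorem continuousOn_image_of_comp {X X' Y : Type*} [TopologicalSpace X] [TopologicalSpace X']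
    [T2Space X'] [TopologicalSpace Y] {K : Set X} {f : X → X'} {h : X' → Y} (hK : IsCompact K)
    (hf : ContinuousOn f K) (hhf : ContinuousOn (h ∘ f) K) : ContinuousOn h (f '' K) := by
  have : CompactSpace K := isCompact_iff_compactSpace.mp hK
  have quotient : Topology.IsQuotientMap (imageFactorization f K) :=
    .of_surjective_continuous imageFactorization_surjective (hf.domRestrict.subtype_mk _)
  rw [continuousOn_iff_continuous_domRestrict, quotient.continuous_iff]
  exact hhf.domRestrict

theorem continuousOn_biUnion_of_isClosed {ι X Y : Type*} [TopologicalSpace X]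
    [TopologicalSpace Y] {s : Set ι} {A : ι → Set X} {h : X → Y} (hs : s.Finite)
    (hA : ∀ i ∈ s, IsClosed (A i)) (hh : ∀ i ∈ s, ContinuousOn h (A i)) :
    ContinuousOn h (⋃ i ∈ s, A i) := by
  have : Finite s := hs
  rw [biUnion_eq_iUnion]
  exact (locallyFinite_of_finite _).continuousOn_iUnion (fun i => hA i i.2) fun i => hh i i.2

theorem dist_le_sSup_dist_image {X Y : Type*} [TopologicalSpace X] [PseudoMetricSpace Y]
    {K : Set X} {g₁ g₂ : X → Y} {t : X} (hK : IsCompact K) (hg₁ : ContinuousOn g₁ K)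
    (hg₂ : ContinuousOn g₂ K) (ht : t ∈ K) :
    dist (g₁ t) (g₂ t) ≤ sSup ((fun t => dist (g₁ t) (g₂ t)) '' K) :=
  have hdist : ContinuousOn (fun t => dist (g₁ t) (g₂ t)) K :=
    continuous_dist.comp_continuousOn (hg₁.prodMk hg₂)
  le_csSup (hK.image_of_continuousOn hdist).bddAbove (mem_image_of_mem _ ht)

namespace IsReadBajraktarevicImage

variable {ι X X' Y Y' : Type*} [TopologicalSpace X] {s : Set ι} {K : Set X} {L : ι → X → X'}
  {F : ι → X → Y → Y'}

theorem continuousOn [TopologicalSpace X'] [T2Space X'] [TopologicalSpace Y]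
    [TopologicalSpace Y'] {g : X → Y} {h : X' → Y'}
    (hgh : IsReadBajraktarevicImage s K L F g h) (hs : s.Finite) (hK : IsCompact K)
    (hL : ∀ i ∈ s, ContinuousOn (L i) K)
    (hF : ∀ i ∈ s, ContinuousOn (fun p : X × Y => F i p.1 p.2) (K ×ˢ univ))
    (hg : ContinuousOn g K) : ContinuousOn h (⋃ i ∈ s, L i '' K) := by
  refine continuousOn_biUnion_of_isClosed hs
    (fun i hi => (hK.image_of_continuousOn (hL i hi)).isClosed) fun i hi => ?_
  have hFg : ContinuousOn (fun t => F i t (g t)) K :=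
    (hF i hi).comp (continuousOn_id.prodMk hg) fun t ht => ⟨ht, mem_univ _⟩
  exact continuousOn_image_of_comp hK (hL i hi) (hFg.congr (hgh i hi))

theorem dist_le [PseudoMetricSpace Y] [PseudoMetricSpace Y'] {g₁ g₂ : X → Y} {h₁ h₂ : X' → Y'}
    {C : ℝ} {t : X'} (hgh₁ : IsReadBajraktarevicImage s K L F g₁ h₁)
    (hgh₂ : IsReadBajraktarevicImage s K L F g₂ h₂) (hK : IsCompact K)
    (hg₁ : ContinuousOn g₁ K) (hg₂ : ContinuousOn g₂ K) (hC : 0 ≤ C)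
    (hF : ∀ i ∈ s, ∀ u ∈ K, ∀ z z', dist (F i u z) (F i u z') ≤ C * dist z z')
    (ht : t ∈ ⋃ i ∈ s, L i '' K) :
    dist (h₁ t) (h₂ t) ≤ C * sSup ((fun u => dist (g₁ u) (g₂ u)) '' K) := by
  obtain ⟨i, hi, u, hu, rfl⟩ := mem_iUnion₂.mp ht
  calc dist (h₁ (L i u)) (h₂ (L i u))
      = dist (F i u (g₁ u)) (F i u (g₂ u)) := by rw [hgh₁ i hi u hu, hgh₂ i hi u hu]
    _ ≤ C * dist (g₁ u) (g₂ u) := hF i hi u hu _ _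
    _ ≤ C * sSup ((fun u => dist (g₁ u) (g₂ u)) '' K) := by
      gcongr
      exact dist_le_sSup_dist_image hK hg₁ hg₂ hu

end IsReadBajraktarevicImage

theorem Icc_subset_biUnion_Icc_succ {α : Type*} [LinearOrder α] (x : ℕ → α) {m n : ℕ}
    (hmn : m < n) : Icc (x m) (x n) ⊆ ⋃ i ∈ Ico m n, Icc (x i) (x (i + 1)) := by
  induction n, hmn using Nat.le_induction with
  | base => exact subset_biUnion_of_mem (u := fun i => Icc (x i) (x (i + 1))) (by simp)
  | succ n hmn ih =>
    calc Icc (x m) (x (n + 1))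
        ⊆ Icc (x m) (x n) ∪ Icc (x n) (x (n + 1)) := Icc_subset_Icc_union_Icc
      _ ⊆ ⋃ i ∈ Ico m (n + 1), Icc (x i) (x (i + 1)) :=
        union_subset (ih.trans (biUnion_subset_biUnion_left (Ico_subset_Ico_right n.le_succ)))
          (subset_biUnion_of_mem (u := fun i => Icc (x i) (x (i + 1)))
            ⟨(Nat.le_succ m).trans hmn, n.lt_succ_self⟩)

theorem Icc_subset_biUnion_image_Icc {α β : Type*} [ConditionallyCompleteLinearOrder α]
    [DenselyOrdered α] [TopologicalSpace α] [OrderTopology α] [LinearOrder β] [TopologicalSpace β]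
    [OrderClosedTopology β] {a b : α} (hab : a ≤ b) {x : ℕ → β} {L : ℕ → α → β} {m n : ℕ}
    (hmn : m < n) (hL : ∀ i ∈ Ico m n, ContinuousOn (L i) (Icc a b))
    (hLa : ∀ i ∈ Ico m n, L i a = x i) (hLb : ∀ i ∈ Ico m n, L i b = x (i + 1)) :
    Icc (x m) (x n) ⊆ ⋃ i ∈ Ico m n, L i '' Icc a b := by
  refine (Icc_subset_biUnion_Icc_succ x hmn).trans (biUnion_mono subset_rfl fun i hi => ?_)
  simpa only [hLa i hi, hLb i hi] using intermediate_value_Icc hab (hL i hi)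

section AffineInterpolation

variable {K : Type*} [Field K] {a b : K}

theorem affine_interpolation_left (hab : a ≠ b) (c d : K) :
    (d - c) / (b - a) * a + (b * c - a * d) / (b - a) = c := by
  have := sub_ne_zero.mpr hab.symm
  field_simp
  ring

theorem affine_interpolation_right (hab : a ≠ b) (c d : K) :
    (d - c) / (b - a) * b + (b * c - a * d) / (b - a) = d := by
  have := sub_ne_zero.mpr hab.symm
  field_simp
  ring

end AffineInterpolation

theorem stmt_0_general {α Y : Type*} [ConditionallyCompleteLinearOrder α] [DenselyOrdered α]
    [TopologicalSpace α] [OrderTopology α] [PseudoMetricSpace Y]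
    (N : ℕ) (hN : 1 < N) (x : ℕ → α) (y : ℕ → Y) (hx : x 1 ≤ x N)
    (L : ℕ → α → α) (hLcont : ∀ i ∈ Ico 1 N, ContinuousOn (L i) (Icc (x 1) (x N)))
    (hL1 : ∀ i ∈ Ico 1 N, L i (x 1) = x i) (hLN : ∀ i ∈ Ico 1 N, L i (x N) = x (i + 1))
    (F : ℕ → α → Y → Y) (r : ℕ → ℝ)
    (hFcont : ∀ i ∈ Ico 1 N,
      ContinuousOn (fun p : α × Y => F i p.1 p.2) (Icc (x 1) (x N) ×ˢ univ))
    (hF1 : ∀ i ∈ Ico 1 N, F i (x 1) (y 1) = y i)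
    (hFN : ∀ i ∈ Ico 1 N, F i (x N) (y N) = y (i + 1))
    (hr : ∀ i ∈ Ico 1 N, 0 ≤ r i ∧ r i < 1)
    (hLip : ∀ i ∈ Ico 1 N, ∀ t ∈ Icc (x 1) (x N), ∀ z z' : Y,
      dist (F i t z) (F i t z') ≤ r i * dist z z')
    (rstar : ℝ) (hrstar : IsGreatest (r '' Ico 1 N) rstar)
    (T : (α → Y) → α → Y)
    (hT : ∀ g ∈ interpolants (x 1) (x N) (y 1) (y N),
      IsReadBajraktarevicImage (Ico 1 N) (Icc (x 1) (x N)) L F g (T g)) :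
    MapsTo T (interpolants (x 1) (x N) (y 1) (y N)) (interpolants (x 1) (x N) (y 1) (y N)) ∧
    rstar < 1 ∧
    ∀ g₁ ∈ interpolants (x 1) (x N) (y 1) (y N), ∀ g₂ ∈ interpolants (x 1) (x N) (y 1) (y N),
      ∀ t ∈ Icc (x 1) (x N),
        dist (T g₁ t) (T g₂ t) ≤
          rstar * sSup ((fun s => dist (g₁ s) (g₂ s)) '' Icc (x 1) (x N)) := by
  have cover := Icc_subset_biUnion_image_Icc hx hN hLcont hL1 hLN
  obtain ⟨n, rfl⟩ : ∃ n, N = n + 1 := ⟨N - 1, by omega⟩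
  have first_mem : 1 ∈ Ico 1 (n + 1) := ⟨le_rfl, hN⟩
  have last_mem : n ∈ Ico 1 (n + 1) := ⟨Nat.le_of_lt_succ hN, n.lt_succ_self⟩
  obtain ⟨⟨i, hi, hri⟩, hmax⟩ := hrstar
  have hrstar_mem : 0 ≤ rstar ∧ rstar < 1 := hri ▸ hr i hi
  refine ⟨fun g hg => ⟨?_, ?_, ?_⟩, hrstar_mem.2, fun g₁ hg₁ g₂ hg₂ t ht => ?_⟩
  · exact ((hT g hg).continuousOn (finite_Ico _ _) isCompact_Icc hLcont hFcont hg.1).mono cover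
  · simpa only [hL1 1 first_mem, hg.2.1, hF1 1 first_mem] using
      hT g hg 1 first_mem (x 1) (left_mem_Icc.mpr hx)
  · simpa only [hLN n last_mem, hg.2.2, hFN n last_mem] using
      hT g hg n last_mem (x (n + 1)) (right_mem_Icc.mpr hx)
  · refine (hT g₁ hg₁).dist_le (hT g₂ hg₂) isCompact_Icc hg₁.1 hg₂.1 hrstar_mem.1
      (fun i hi u hu z z' => ?_) (cover ht)
    exact (hLip i hi u hu z z').trans (by gcongr; exact hmax (mem_image_of_mem r hi))

/-- The Read–Bajraktarević operator `T` maps the space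
`G = {h ∈ C(I,ℝ) : h(x₁) = y₁, h(x_N) = y_N}` into itself and is a contraction
with respect to the supremum metric, with contraction factor
`r* = max{rᵢ : 1 ≤ i ≤ N-1} < 1`. -/
theorem stmt_0
    (N : ℕ) (hN : 2 < N)
    (x y : ℕ → ℝ)
    (hx : ∀ i, 1 ≤ i → i < N → x i < x (i + 1))
    (L : ℕ → ℝ → ℝ)
    (hL : ∀ i, 1 ≤ i → i < N → ∀ t : ℝ, L i t =
      ((x (i + 1) - x i) / (x N - x 1)) * t
        + (x N * x i - x 1 * x (i + 1)) / (x N - x 1))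
    (F : ℕ → ℝ → ℝ → ℝ) (r : ℕ → ℝ)
    (hFcont : ∀ i, 1 ≤ i → i < N → Continuous (fun p : ℝ × ℝ => F i p.1 p.2))
    (hF1 : ∀ i, 1 ≤ i → i < N → F i (x 1) (y 1) = y i)
    (hFN : ∀ i, 1 ≤ i → i < N → F i (x N) (y N) = y (i + 1))
    (hr : ∀ i, 1 ≤ i → i < N → 0 < r i ∧ r i < 1)
    (hLip : ∀ i, 1 ≤ i → i < N → ∀ t ∈ Set.Icc (x 1) (x N), ∀ z z' : ℝ,
      |F i t z - F i t z'| ≤ r i * |z - z'|)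
    (rstar : ℝ)
    (hrstar : IsGreatest {s : ℝ | ∃ i, 1 ≤ i ∧ i < N ∧ s = r i} rstar)
    (T : (ℝ → ℝ) → (ℝ → ℝ))
    (hT : ∀ g : ℝ → ℝ, ContinuousOn g (Set.Icc (x 1) (x N)) →
      g (x 1) = y 1 → g (x N) = y N →
      ∀ i, 1 ≤ i → i < N → ∀ t ∈ Set.Icc (x 1) (x N),
        T g (L i t) = F i t (g t)) :
    -- T maps G into G:
    (∀ g : ℝ → ℝ, ContinuousOn g (Set.Icc (x 1) (x N)) →
        g (x 1) = y 1 → g (x N) = y N →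
      ContinuousOn (T g) (Set.Icc (x 1) (x N)) ∧
        T g (x 1) = y 1 ∧ T g (x N) = y N) ∧
    -- the contraction factor is < 1:
    rstar < 1 ∧
    -- T is a contraction with factor r* for the sup metric:
    (∀ g₁ g₂ : ℝ → ℝ,
      ContinuousOn g₁ (Set.Icc (x 1) (x N)) → g₁ (x 1) = y 1 → g₁ (x N) = y N →
      ContinuousOn g₂ (Set.Icc (x 1) (x N)) → g₂ (x 1) = y 1 → g₂ (x N) = y N →
      ∀ t ∈ Set.Icc (x 1) (x N),
        |T g₁ t - T g₂ t| ≤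
          rstar * sSup ((fun s => |g₁ s - g₂ s|) '' Set.Icc (x 1) (x N))) := by
  have hx1N : x 1 < x N :=
    strictMonoOn_of_lt_add_one ordConnected_Icc (fun i _ hi hi' => hx i hi.1 hi'.2)
      ⟨le_rfl, by omega⟩ ⟨by omega, le_rfl⟩ (by omega)
  have hrange : {s : ℝ | ∃ i, 1 ≤ i ∧ i < N ∧ s = r i} = r '' Ico 1 N := by
    ext; simp only [mem_ofPred_eq, mem_image, mem_Ico, and_assoc, eq_comm]
  obtain ⟨hmaps, hlt, hdist⟩ := stmt_0_general N (by omega) x y hx1N.le L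
    (fun i hi => by simp only [funext (hL i hi.1 hi.2)]; fun_prop)
    (fun i hi => by rw [hL i hi.1 hi.2, affine_interpolation_left hx1N.ne])
    (fun i hi => by rw [hL i hi.1 hi.2, affine_interpolation_right hx1N.ne])
    F r (fun i hi => (hFcont i hi.1 hi.2).continuousOn) (fun i hi => hF1 i hi.1 hi.2)
    (fun i hi => hFN i hi.1 hi.2) (fun i hi => (hr i hi.1 hi.2).imp_left le_of_lt)
    (fun i hi => hLip i hi.1 hi.2) rstar (hrange ▸ hrstar) T
    (fun g hg i hi => hT g hg.1 hg.2.1 hg.2.2 i hi.1 hi.2)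
  exact ⟨fun g hg hg1 hgN => hmaps ⟨hg, hg1, hgN⟩, hlt,
    fun g₁ g₂ h₁ h₁1 h₁N h₂ h₂1 h₂N => hdist g₁ ⟨h₁, h₁1, h₁N⟩ g₂ ⟨h₂, h₂1, h₂N⟩⟩
end

section
/- Let x_1 < x_2 < ... < x_N (N > 2), I = [x_1, x_N], a_i = (x_{i+1} − x_i)/(x_N − x_1), and L_i(x) = a_i x + b_i with L_i(x_1) = x_i, L_i(x_N) = x_{i+1}. Let F_i(x,y) = α_i y + q_i(x) where q_i(x) = P_i(x)/Q_i(x) with P_i, Q_i polynomials and Q_i(x) ≠ 0 for all x ∈ I, and suppose that for some integer p ≥ 0 one has |α_i| < a_i^p for all i. Set F_{i,m}(x,y) = (α_i y + q_i^{(m)}(x))/a_i^m, y_{1,m} = q_1^{(m)}(x_1)/(a_1^m − α_1), y_{N,m} = q_{N-1}^{(m)}(x_N)/(a_{N-1}^m − α_{N-1}) for m = 1, ..., p. If F_{i-1,m}(x_N, y_{N,m}) = F_{i,m}(x_1, y_{1,m}) for all i = 2,...,N−1 and m = 1,...,p, then the unique continuous function Ψ : I → ℝ satisfying Ψ(L_i(x))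 = α_i Ψ(x) + q_i(x) is p-times continuously differentiable on I, and for each m = 1,...,p the m-th derivative Ψ^{(m)} is the unique continuous function satisfying Ψ^{(m)}(L_i(x)) = F_{i,m}(x, Ψ^{(m)}(x)) = (α_i Ψ^{(m)}(x) + q_i^{(m)}(x))/a_i^m for all x ∈ I and i = 1,...,N−1. -/
/-!
Differentiating `Ψ (Lᵢ t) = αᵢ Ψ t + qᵢ t` formally gives `aᵢ Ψ' (Lᵢ t) = αᵢ Ψ' t + qᵢ' t`. Under
the join-up condition this equation has a continuous solution `g`, the fixed point of a contraction
on the continuous functions with prescribed values at `x₁` and `x_N`. A primitive `A` of `g`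
satisfies the equation of `Ψ` up to an additive constant for each `i`, so `D = Ψ - A` satisfies
`D (Lᵢ t) - D xᵢ = αᵢ (D t - D x₁)`. At `t = x_N` these relations telescope to
`D x_N - D x₁ = (∑ αᵢ) (D x_N - D x₁)`, and `∑ αᵢ < ∑ aᵢ = 1` forces `D x_N = D x₁`; the contraction
then makes `D` constant, that is, `Ψ' = g`. The same argument at order `m`, with `αᵢ / aᵢᵐ` in place
of `αᵢ`, gives the higher derivatives by induction.
-/

open Set
open scoped NNReal

namespace FractalInterpolation

section CompactSpaces

theorem eqOn_zero_of_exists_norm_lt {X E : Type*} [TopologicalSpace X] [NormedAddCommGroup E]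
    {K : Set X} (hK : IsCompact K) {D : X → E} (hD : ContinuousOn D K)
    (h : ∀ u ∈ K, D u ≠ 0 → ∃ t ∈ K, ‖D u‖ < ‖D t‖) : EqOn D 0 K := by
  intro t ht
  obtain ⟨u, hu, hmax⟩ := hK.exists_isMaxOn ⟨t, ht⟩ hD.norm
  have hDu : D u = 0 := by
    by_contra hne
    obtain ⟨v, hv, hlt⟩ := h u hu hne
    exact hlt.not_ge (hmax hv)
  simpa [hDu] using hmax ht

variable {ι X Y Z : Type*} [Finite ι] [TopologicalSpace X] [CompactSpace X] [TopologicalSpace Z]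
  [T2Space Z]

/- A continuous surjection from a compact space onto a Hausdorff space is a quotient map, so the
function `(i, t) ↦ φ i t` on `ι × X` descends along `(i, t) ↦ L i t`. -/
theorem exists_continuousMap_comp_eq [TopologicalSpace Y] (L : ι → C(X, Z))
    (hL : ∀ u, ∃ i t, L i t = u) (φ : ι → C(X, Y))
    (hφ : ∀ i j s t, L i s = L j t → φ i s = φ j t) :
    ∃ h : C(Z, Y), ∀ i t, h (L i t) = φ i t := by
  let p : C(Σ _ : ι, X, Z) := ⟨fun z ↦ L z.1 z.2, continuous_sigma fun i ↦ (L i).continuous⟩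
  let ψ : C(Σ _ : ι, X, Y) := ⟨fun z ↦ φ z.1 z.2, continuous_sigma fun i ↦ (φ i).continuous⟩
  have hsurj : Function.Surjective p := fun u ↦ by
    obtain ⟨i, t, hit⟩ := hL u
    exact ⟨⟨i, t⟩, hit⟩
  have hp : Topology.IsQuotientMap p := p.continuous.isClosedMap.isQuotientMap p.continuous hsurj
  refine ⟨hp.lift ψ fun z w hzw ↦ hφ _ _ _ _ hzw, fun i t ↦ ?_⟩
  exact DFunLike.congr_fun (hp.lift_comp ψ fun z w hzw ↦ hφ _ _ _ _ hzw) ⟨i, t⟩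

/- The solution is the fixed point of the Read–Bajraktarević operator, which sends `g` to the
function equal to `F i t (g t)` at `L i t`. -/
theorem exists_continuousMap_self_referential [T2Space X] [MetricSpace Y] [CompleteSpace Y]
    (L : ι → C(X, X)) (hL : ∀ u, ∃ i t, L i t = u)
    {F : ι → X → Y → Y} (hF : ∀ i, Continuous fun z : X × Y ↦ F i z.1 z.2)
    {k : ι → ℝ≥0} (hk : ∀ i, k i < 1) (hFk : ∀ i t, LipschitzWith (k i) (F i t))
    {S : Set C(X, Y)} (hSc : IsClosed S) (hSne : S.Nonempty)
    (hcompat : ∀ g ∈ S, ∀ i j s t, L i s = L j t → F i s (g s) = F j t (g t))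
    (hmaps : ∀ g ∈ S, ∀ h : C(X, Y), (∀ i t, h (L i t) = F i t (g t)) → h ∈ S) :
    ∃ g ∈ S, ∀ i t, g (L i t) = F i t (g t) := by
  have hT (g : S) : ∃ h : S, ∀ i t, h.1 (L i t) = F i t (g.1 t) := by
    obtain ⟨h, hh⟩ := exists_continuousMap_comp_eq L hL
      (fun i ↦ ⟨fun t ↦ F i t (g.1 t), (hF i).comp (continuous_id.prodMk g.1.continuous)⟩)
      (hcompat g.1 g.2)
    exact ⟨⟨h, hmaps g.1 g.2 h hh⟩, hh⟩
  choose T hT using hT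
  obtain ⟨K, hK1, hkK⟩ : ∃ K < 1, ∀ i, k i ≤ K := by
    have := Fintype.ofFinite ι
    exact ⟨Finset.univ.sup k, (Finset.sup_lt_iff one_pos).2 fun i _ ↦ hk i,
      fun i ↦ Finset.le_sup (Finset.mem_univ i)⟩
  have hTc : ContractingWith K T := by
    refine ⟨hK1, LipschitzWith.of_dist_le_mul fun f g ↦ ?_⟩
    refine (ContinuousMap.dist_le (by positivity)).2 fun u ↦ ?_
    obtain ⟨i, t, rfl⟩ := hL u
    rw [hT, hT]
    calc dist (F i t (f.1 t)) (F i t (g.1 t)) ≤ k i * dist (f.1 t) (g.1 t) :=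
          (hFk i t).dist_le_mul _ _
      _ ≤ K * dist f g := by
          gcongr
          · exact hkK i
          · exact ContinuousMap.dist_apply_le_dist t
  have := hSc.completeSpace_coe
  have := hSne.to_subtype
  have hfix : T (hTc.fixedPoint T) = hTc.fixedPoint T := hTc.fixedPoint_isFixedPt
  exact ⟨_, (hTc.fixedPoint T).2, fun i t ↦ by rw [← hT, hfix]⟩

end CompactSpaces

section Primitive

theorem exists_hasDerivWithinAt_of_continuousOn {E : Type*} [NormedAddCommGroup E]
    [NormedSpace ℝ E] [CompleteSpace E] {a b : ℝ} {g : ℝ → E} (hg : ContinuousOn g (Icc a b)) :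
    ∃ A : ℝ → E, ∀ t ∈ Icc a b, HasDerivWithinAt A (g t) (Icc a b) t := by
  refine ⟨fun t ↦ ∫ u in a..t, g u, fun t ht ↦ ?_⟩
  have : Fact (t ∈ Icc a b) := ⟨ht⟩
  exact intervalIntegral.integral_hasDerivWithinAt_right
    (hg.mono (Icc_subset_Icc_right ht.2) |>.intervalIntegrable_of_Icc ht.1)
    (hg.stronglyMeasurableAtFilter_nhdsWithin measurableSet_Icc t) (hg t ht)

theorem hasDerivAt_iteratedDeriv {𝕜 F : Type*} [NontriviallyNormedField 𝕜]
    [NormedAddCommGroup F] [NormedSpace 𝕜 F] {f : 𝕜 → F} {t : 𝕜} {n : WithTop ℕ∞}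
    (hf : ContDiffAt 𝕜 n f t) {m : ℕ} (hm : m < n) :
    HasDerivAt (iteratedDeriv m f) (iteratedDeriv (m + 1) f t) t := by
  have h : DifferentiableAt 𝕜 (iteratedDeriv m f) t := by
    simpa [differentiableWithinAt_univ, iteratedDerivWithin_univ] using
      hf.contDiffWithinAt.differentiableWithinAt_iteratedDerivWithin (s := univ) hm (by simp)
  simpa only [iteratedDeriv_succ] using h.hasDerivAt

theorem contDiffAt_eval_div_eval {𝕜 : Type*} [NontriviallyNormedField 𝕜] (P Q : Polynomial 𝕜)
    {t : 𝕜} (hQ : Q.eval t ≠ 0) {n : WithTop ℕ∞} :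
    ContDiffAt 𝕜 n (fun u ↦ P.eval u / Q.eval u) t := by
  have contDiff_eval (R : Polynomial 𝕜) : ContDiff 𝕜 n fun u ↦ R.eval u := by
    simpa using R.contDiff_aeval (𝕜 := 𝕜) n
  exact (contDiff_eval P).contDiffAt.div (contDiff_eval Q).contDiffAt hQ

end Primitive

section Subintervals

/-- The ratio `aᵢ` of the length of `[xᵢ, xᵢ₊₁]` to that of `[x₁, x_N]`. -/
noncomputable def subintervalRatio (N : ℕ) (x : ℕ → ℝ) (i : ℕ) : ℝ :=
  (x (i + 1) - x i) / (x N - x 1)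

/-- The affine map `Lᵢ` of `[x₁, x_N]` onto `[xᵢ, xᵢ₊₁]`, centred at `x₁`. -/
noncomputable def subintervalMap (N : ℕ) (x : ℕ → ℝ) (i : ℕ) (t : ℝ) : ℝ :=
  x i + subintervalRatio N x i * (t - x 1)

variable {N : ℕ} {x : ℕ → ℝ}

theorem exists_mem_Icc_succ (hN : 1 < N) {t : ℝ} (ht : t ∈ Icc (x 1) (x N)) :
    ∃ i ∈ Ico 1 N, t ∈ Icc (x i) (x (i + 1)) := by
  induction N, hN using Nat.le_induction with
  | base => exact ⟨1, by simp, ht⟩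
  | succ n hn ih =>
    rcases le_total t (x n) with h | h
    · obtain ⟨i, hi, hit⟩ := ih ⟨ht.1, h⟩
      exact ⟨i, Ico_subset_Ico_right n.le_succ hi, hit⟩
    · exact ⟨n, ⟨by omega, n.lt_succ_self⟩, h, ht.2⟩

variable {i j : ℕ} {s t : ℝ}

@[simp]
theorem subintervalMap_left : subintervalMap N x i (x 1) = x i := by
  simp [subintervalMap]

theorem hasDerivAt_subintervalMap :
    HasDerivAt (subintervalMap N x i) (subintervalRatio N x i) t := by
  have h := (((hasDerivAt_id t).sub_const (x 1)).const_mul (subintervalRatio N x i)).const_add (x i)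
  rwa [mul_one] at h

theorem first_lt_last (hN : 1 < N) (hx : StrictMonoOn x (Icc 1 N)) : x 1 < x N :=
  hx ⟨le_rfl, hN.le⟩ ⟨hN.le, le_rfl⟩ hN

theorem subintervalRatio_pos (hx : StrictMonoOn x (Icc 1 N)) (hi : i ∈ Ico 1 N) :
    0 < subintervalRatio N x i :=
  div_pos (sub_pos.2 (hx ⟨hi.1, hi.2.le⟩ ⟨by omega, hi.2⟩ i.lt_succ_self))
    (sub_pos.2 (first_lt_last (hi.1.trans_lt hi.2) hx))

theorem sum_subintervalRatio (hN : 1 < N) (hx : StrictMonoOn x (Icc 1 N)) :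
    ∑ i ∈ Finset.Ico 1 N, subintervalRatio N x i = 1 := by
  simp only [subintervalRatio]
  rw [← Finset.sum_div, Finset.sum_Ico_sub x hN.le,
    div_self (sub_pos.2 (first_lt_last hN hx)).ne']

theorem subintervalRatio_le_one (hx : StrictMonoOn x (Icc 1 N)) (hi : i ∈ Ico 1 N) :
    subintervalRatio N x i ≤ 1 := by
  rw [← sum_subintervalRatio (hi.1.trans_lt hi.2) hx]
  exact Finset.single_le_sum (f := subintervalRatio N x)
    (fun j hj ↦ (subintervalRatio_pos hx (Finset.mem_Ico.1 hj)).le) (Finset.mem_Ico.2 hi)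

theorem subintervalMap_right (hN : 1 < N) (hx : StrictMonoOn x (Icc 1 N)) :
    subintervalMap N x i (x N) = x (i + 1) := by
  rw [subintervalMap, subintervalRatio,
    div_mul_cancel₀ _ (sub_pos.2 (first_lt_last hN hx)).ne', add_sub_cancel]

theorem subintervalMap_eq (hN : 1 < N) (hx : StrictMonoOn x (Icc 1 N)) :
    subintervalMap N x i t =
      subintervalRatio N x i * t + (x N * x i - x 1 * x (i + 1)) / (x N - x 1) := by
  have := (sub_pos.2 (first_lt_last hN hx)).ne'
  simp only [subintervalMap, subintervalRatio]
  field_simp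
  ring

theorem strictMono_subintervalMap (hx : StrictMonoOn x (Icc 1 N)) (hi : i ∈ Ico 1 N) :
    StrictMono (subintervalMap N x i) := fun s t hst ↦ by
  have := subintervalRatio_pos hx hi
  simp only [subintervalMap]
  gcongr

theorem image_subintervalMap (hx : StrictMonoOn x (Icc 1 N)) (hi : i ∈ Ico 1 N) :
    subintervalMap N x i '' Icc (x 1) (x N) = Icc (x i) (x (i + 1)) := by
  have hN : 1 < N := hi.1.trans_lt hi.2
  have affine : subintervalMap N x i =
      fun t ↦ subintervalRatio N x i * t + (x i - subintervalRatio N x i * x 1) := by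
    funext t
    simp only [subintervalMap]
    ring
  have hleft : subintervalMap N x i (x 1) = x i := subintervalMap_left
  have hright : subintervalMap N x i (x N) = x (i + 1) := subintervalMap_right hN hx
  rw [← hleft, ← hright, affine, image_affine_Icc' (subintervalRatio_pos hx hi)]

theorem mapsTo_subintervalMap (hx : StrictMonoOn x (Icc 1 N)) (hi : i ∈ Ico 1 N) :
    MapsTo (subintervalMap N x i) (Icc (x 1) (x N)) (Icc (x 1) (x N)) := by
  rw [mapsTo_iff_image_subset, image_subintervalMap hx hi]
  have hN : 1 ≤ N := hi.1.trans hi.2.le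
  exact Icc_subset_Icc (hx.monotoneOn ⟨le_rfl, hN⟩ ⟨hi.1, hi.2.le⟩ hi.1)
    (hx.monotoneOn ⟨by omega, hi.2⟩ ⟨hN, le_rfl⟩ hi.2)

theorem exists_subintervalMap_eq (hN : 1 < N) (hx : StrictMonoOn x (Icc 1 N)) {u : ℝ}
    (hu : u ∈ Icc (x 1) (x N)) :
    ∃ i ∈ Ico 1 N, ∃ t ∈ Icc (x 1) (x N), subintervalMap N x i t = u := by
  obtain ⟨i, hi, hui⟩ := exists_mem_Icc_succ hN hu
  rw [← image_subintervalMap hx hi] at hui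
  exact ⟨i, hi, hui⟩

theorem eq_endpoints_of_subintervalMap_eq (hx : StrictMonoOn x (Icc 1 N)) (hi : i ∈ Ico 1 N)
    (hj : j ∈ Ico 1 N) (hij : i < j) (hs : s ∈ Icc (x 1) (x N)) (ht : t ∈ Icc (x 1) (x N))
    (hst : subintervalMap N x i s = subintervalMap N x j t) :
    j = i + 1 ∧ s = x N ∧ t = x 1 := by
  have hN : 1 < N := hi.1.trans_lt hi.2
  have hsi : subintervalMap N x i s ≤ x (i + 1) :=
    (image_subintervalMap hx hi ▸ mem_image_of_mem _ hs).2
  have htj : x j ≤ subintervalMap N x j t :=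
    (image_subintervalMap hx hj ▸ mem_image_of_mem _ ht).1
  have hij' : x (i + 1) ≤ x j := hx.monotoneOn ⟨by omega, hi.2⟩ ⟨hj.1, hj.2.le⟩ hij
  refine ⟨hx.injOn ⟨hj.1, hj.2.le⟩ ⟨by omega, hi.2⟩ (by linarith),
    (strictMono_subintervalMap hx hi).injective ?_, (strictMono_subintervalMap hx hj).injective ?_⟩
  · rw [subintervalMap_right hN hx]
    linarith
  · rw [subintervalMap_left]
    linarith

end Subintervals

section Homogeneous

variable {E : Type*} [NormedAddCommGroup E] [NormedSpace ℝ E] {N : ℕ} {x : ℕ → ℝ} {β : ℕ → ℝ}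
  {D : ℝ → E}

theorem eqOn_zero_of_map_eq_smul (hN : 1 < N) (hx : StrictMonoOn x (Icc 1 N))
    (hβ : ∀ i ∈ Ico 1 N, |β i| < 1) (hDc : ContinuousOn D (Icc (x 1) (x N)))
    (hD : ∀ i ∈ Ico 1 N, ∀ t ∈ Icc (x 1) (x N), D (subintervalMap N x i t) = β i • D t) :
    EqOn D 0 (Icc (x 1) (x N)) := by
  refine eqOn_zero_of_exists_norm_lt isCompact_Icc hDc fun u hu hDu ↦ ?_
  obtain ⟨i, hi, t, ht, rfl⟩ := exists_subintervalMap_eq hN hx hu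
  rw [hD i hi t ht] at hDu ⊢
  have hDt : 0 < ‖D t‖ := norm_pos_iff.2 (right_ne_zero_of_smul hDu)
  refine ⟨t, ht, ?_⟩
  rw [norm_smul, Real.norm_eq_abs]
  exact mul_lt_of_lt_one_left hDt (hβ i hi)

/- Taking `t = x_N` and telescoping gives `D x_N - D x₁ = (∑ βᵢ) • (D x_N - D x₁)`, so `D` takes the
same value at all the nodes, and `D - D x₁` solves the homogeneous equation. -/
theorem eq_left_of_sub_map_eq_smul (hN : 1 < N) (hx : StrictMonoOn x (Icc 1 N))
    (hβ : ∀ i ∈ Ico 1 N, |β i| < 1) (hsum : ∑ i ∈ Finset.Ico 1 N, β i ≠ 1)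
    (hDc : ContinuousOn D (Icc (x 1) (x N)))
    (hD : ∀ i ∈ Ico 1 N, ∀ t ∈ Icc (x 1) (x N),
      D (subintervalMap N x i t) - D (x i) = β i • (D t - D (x 1))) :
    ∀ t ∈ Icc (x 1) (x N), D t = D (x 1) := by
  have hincr : ∀ i ∈ Ico 1 N, D (x (i + 1)) - D (x i) = β i • (D (x N) - D (x 1)) := by
    intro i hi
    rw [← subintervalMap_right hN hx, hD i hi _ (right_mem_Icc.2 (first_lt_last hN hx).le)]
  have hlast : D (x N) - D (x 1) = 0 := by
    have htel : D (x N) - D (x 1) = (∑ i ∈ Finset.Ico 1 N, β i) • (D (x N) - D (x 1)) := by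
      rw [Finset.sum_smul, ← Finset.sum_Ico_sub (fun i ↦ D (x i)) hN.le]
      exact Finset.sum_congr rfl fun i hi ↦ by
        rw [hincr i (Finset.mem_Ico.1 hi), Finset.sum_Ico_sub (fun i ↦ D (x i)) hN.le]
    by_contra hne
    exact hsum (smul_left_injective ℝ hne (by simpa using htel.symm))
  have hnode (i : ℕ) (hi : 1 ≤ i) : i < N → D (x i) = D (x 1) := by
    induction i, hi using Nat.le_induction with
    | base => exact fun _ ↦ rfl
    | succ i hi ih =>
      intro hiN
      have := hincr i ⟨hi, by omega⟩
      rwa [hlast, smul_zero, sub_eq_zero, ih (by omega)] at this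
  have hzero : EqOn (fun t ↦ D t - D (x 1)) 0 (Icc (x 1) (x N)) := by
    refine eqOn_zero_of_map_eq_smul hN hx hβ (hDc.sub continuousOn_const) fun i hi t ht ↦ ?_
    rw [← hD i hi t ht, hnode i hi.1 hi.2]
  exact fun t ht ↦ sub_eq_zero.1 (hzero ht)

end Homogeneous

section SelfReferential

variable {E : Type*} [NormedAddCommGroup E] [NormedSpace ℝ E]

/-- The map `F_{i,m}(t, y) = (αᵢ y + sᵢ(t)) / aᵢᵐ`, where `s` stands for the `m`-th derivative of
the forcing terms. -/
noncomputable def branch (N : ℕ) (x α : ℕ → ℝ) (s : ℕ → ℝ → E) (m i : ℕ) (t : ℝ) (y : E) : E :=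
  (subintervalRatio N x i ^ m)⁻¹ • (α i • y + s i t)

/-- `f` is a continuous solution on `[x₁, x_N]` of `f (Lᵢ t) = F_{i,m}(t, f t)`, that is, a fixed
point of the Read–Bajraktarević operator of order `m`; outside the interval `f` is arbitrary. -/
structure IsSelfReferential (N : ℕ) (x α : ℕ → ℝ) (s : ℕ → ℝ → E) (m : ℕ) (f : ℝ → E) :
    Prop where
  continuousOn : ContinuousOn f (Icc (x 1) (x N))
  map_eq : ∀ i ∈ Ico 1 N, ∀ t ∈ Icc (x 1) (x N),
    f (subintervalMap N x i t) = branch N x α s m i t (f t)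

/-- The join-up conditions of order `m`: `y₁` and `y_N` are the values a solution must take at
`x₁` and `x_N`, and with them neighbouring maps `F_{i,m}` agree at the interior nodes. -/
structure JoinUp (N : ℕ) (x α : ℕ → ℝ) (s : ℕ → ℝ → E) (m : ℕ) (y₁ yN : E) : Prop where
  left : branch N x α s m 1 (x 1) y₁ = y₁
  right : branch N x α s m (N - 1) (x N) yN = yN
  join : ∀ i ∈ Ico 2 N, branch N x α s m (i - 1) (x N) yN = branch N x α s m i (x 1) y₁

variable {N : ℕ} {x α : ℕ → ℝ} {s : ℕ → ℝ → E} {m : ℕ} {f g : ℝ → E} {y₁ yN : E}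

theorem branch_eq_self {i : ℕ} {t : ℝ} {y : E} (ha : subintervalRatio N x i ≠ 0)
    (hα : subintervalRatio N x i ^ m - α i ≠ 0)
    (hy : y = (subintervalRatio N x i ^ m - α i)⁻¹ • s i t) : branch N x α s m i t y = y := by
  rw [eq_inv_smul_iff₀ hα, sub_smul, sub_eq_iff_eq_add'] at hy
  rw [branch, inv_smul_eq_iff₀ (pow_ne_zero m ha), hy]

theorem branch_sub_branch {i : ℕ} {t : ℝ} {y z : E} :
    branch N x α s m i t y - branch N x α s m i t z =
      (α i / subintervalRatio N x i ^ m) • (y - z) := by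
  simp only [branch, div_eq_inv_mul]
  module

theorem abs_div_pow_lt_one (hx : StrictMonoOn x (Icc 1 N)) {i : ℕ} (hi : i ∈ Ico 1 N)
    (hα : |α i| < subintervalRatio N x i ^ m) : |α i / subintervalRatio N x i ^ m| < 1 := by
  have ha := pow_pos (subintervalRatio_pos hx hi) m
  rwa [abs_div, abs_of_pos ha, div_lt_one ha]

theorem abs_lt_pow_of_le (hx : StrictMonoOn x (Icc 1 N)) {i n : ℕ} (hi : i ∈ Ico 1 N)
    (hα : |α i| < subintervalRatio N x i ^ n) (hmn : m ≤ n) :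
    |α i| < subintervalRatio N x i ^ m :=
  hα.trans_le (pow_le_pow_of_le_one (subintervalRatio_pos hx hi).le
    (subintervalRatio_le_one hx hi) hmn)

theorem IsSelfReferential.eqOn (hN : 1 < N) (hx : StrictMonoOn x (Icc 1 N))
    (hα : ∀ i ∈ Ico 1 N, |α i| < subintervalRatio N x i ^ m)
    (hf : IsSelfReferential N x α s m f) (hg : IsSelfReferential N x α s m g) :
    EqOn f g (Icc (x 1) (x N)) := by
  have hzero : EqOn (f - g) 0 (Icc (x 1) (x N)) := by
    refine eqOn_zero_of_map_eq_smul hN hx (fun i hi ↦ abs_div_pow_lt_one hx hi (hα i hi))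
      (hf.continuousOn.sub hg.continuousOn) fun i hi t ht ↦ ?_
    rw [Pi.sub_apply, hf.map_eq i hi t ht, hg.map_eq i hi t ht, branch_sub_branch, Pi.sub_apply]
  exact fun t ht ↦ sub_eq_zero.1 (hzero ht)

theorem joinUp_of_eq (hN : 1 < N) (hx : StrictMonoOn x (Icc 1 N))
    (hα : ∀ i ∈ Ico 1 N, |α i| < subintervalRatio N x i ^ m)
    (hy₁ : y₁ = (subintervalRatio N x 1 ^ m - α 1)⁻¹ • s 1 (x 1))
    (hyN : yN = (subintervalRatio N x (N - 1) ^ m - α (N - 1))⁻¹ • s (N - 1) (x N))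
    (hjoin : ∀ i ∈ Ico 2 N, branch N x α s m (i - 1) (x N) yN = branch N x α s m i (x 1) y₁) :
    JoinUp N x α s m y₁ yN := by
  have hfix {i : ℕ} (hi : i ∈ Ico 1 N) {t : ℝ} {y : E}
      (hy : y = (subintervalRatio N x i ^ m - α i)⁻¹ • s i t) : branch N x α s m i t y = y :=
    branch_eq_self (subintervalRatio_pos hx hi).ne'
      (sub_pos.2 ((le_abs_self _).trans_lt (hα i hi))).ne' hy
  exact ⟨hfix ⟨le_rfl, hN⟩ hy₁, hfix ⟨by omega, by omega⟩ hyN, hjoin⟩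

theorem JoinUp.branch_eq_of_map_eq (h : JoinUp N x α s m y₁ yN)
    (hx : StrictMonoOn x (Icc 1 N)) {g : Icc (x 1) (x N) → E}
    (hg₁ : ∀ t : Icc (x 1) (x N), (t : ℝ) = x 1 → g t = y₁)
    (hgN : ∀ t : Icc (x 1) (x N), (t : ℝ) = x N → g t = yN) {i j : ℕ}
    (hi : i ∈ Ico 1 N) (hj : j ∈ Ico 1 N) {t u : Icc (x 1) (x N)}
    (htu : subintervalMap N x i t = subintervalMap N x j u) :
    branch N x α s m i t (g t) = branch N x α s m j u (g u) := by
  wlog hij : i ≤ j generalizing i j t u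
  · exact (this hj hi htu.symm (le_of_not_ge hij)).symm
  rcases hij.eq_or_lt with rfl | hij
  · rw [Subtype.ext ((strictMono_subintervalMap hx hi).injective htu)]
  · obtain ⟨rfl, ht, hu⟩ := eq_endpoints_of_subintervalMap_eq hx hi hj hij t.2 u.2 htu
    rw [hg₁ u hu, hgN t ht, ht, hu]
    exact h.join (i + 1) ⟨by simpa using hi.1, hj.2⟩

theorem lipschitzWith_branch {i : ℕ} {t : ℝ} :
    LipschitzWith ‖α i / subintervalRatio N x i ^ m‖₊ (branch N x α s m i t) := by
  refine LipschitzWith.of_dist_le_mul fun y z ↦ ?_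
  rw [dist_eq_norm, branch_sub_branch, norm_smul, dist_eq_norm, coe_nnnorm]

theorem continuous_branch {i : ℕ} (hs : ContinuousOn (s i) (Icc (x 1) (x N))) :
    Continuous fun z : Icc (x 1) (x N) × E ↦ branch N x α s m i z.1 z.2 := by
  have hs' : Continuous fun z : Icc (x 1) (x N) × E ↦ s i z.1 :=
    hs.comp_continuous (by fun_prop) fun z ↦ z.1.2
  exact ((continuous_snd.const_smul (α i)).add hs').const_smul _

theorem exists_continuousMap_endpoints_eq {a b : ℝ} (hab : a < b) (y z : E) :
    ∃ g : C(Icc a b, E), g ⟨a, left_mem_Icc.2 hab.le⟩ = y ∧ g ⟨b, right_mem_Icc.2 hab.le⟩ = z :=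
  ⟨⟨fun t ↦ AffineMap.lineMap y z ((t - a) / (b - a)), by fun_prop⟩,
    by simp, by simp [(sub_pos.2 hab).ne']⟩

/-- The affine map `Lᵢ` as a continuous self-map of `[x₁, x_N]`. -/
noncomputable def subintervalContinuousMap (hx : StrictMonoOn x (Icc 1 N)) (i : Ico 1 N) :
    C(Icc (x 1) (x N), Icc (x 1) (x N)) where
  toFun := (mapsTo_subintervalMap hx i.2).restrict
  continuous_toFun := ContinuousOn.mapsToRestrict
    (fun _ _ ↦ hasDerivAt_subintervalMap.continuousAt.continuousWithinAt) _

theorem JoinUp.exists_isSelfReferential [CompleteSpace E] (hN : 1 < N)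
    (hx : StrictMonoOn x (Icc 1 N)) (hα : ∀ i ∈ Ico 1 N, |α i| < subintervalRatio N x i ^ m)
    (hs : ∀ i ∈ Ico 1 N, ContinuousOn (s i) (Icc (x 1) (x N))) (h : JoinUp N x α s m y₁ yN) :
    ∃ f, IsSelfReferential N x α s m f := by
  have hlt := first_lt_last hN hx
  let a : Icc (x 1) (x N) := ⟨x 1, left_mem_Icc.2 hlt.le⟩
  let b : Icc (x 1) (x N) := ⟨x N, right_mem_Icc.2 hlt.le⟩
  let L := subintervalContinuousMap hx
  have hLa : L ⟨1, le_rfl, hN⟩ a = a := Subtype.ext subintervalMap_left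
  have hLb : L ⟨N - 1, by simp; omega⟩ b = b := Subtype.ext <| by
    change subintervalMap N x (N - 1) (x N) = x N
    rw [subintervalMap_right hN hx, Nat.sub_add_cancel hN.le]
  have hLsurj (u : Icc (x 1) (x N)) : ∃ i t, L i t = u := by
    obtain ⟨i, hi, t, ht, htu⟩ := exists_subintervalMap_eq hN hx u.2
    exact ⟨⟨i, hi⟩, ⟨t, ht⟩, Subtype.ext htu⟩
  have hclosed : IsClosed {g : C(Icc (x 1) (x N), E) | g a = y₁ ∧ g b = yN} :=
    (isClosed_eq (continuous_eval_const a) continuous_const).inter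
      (isClosed_eq (continuous_eval_const b) continuous_const)
  obtain ⟨g, -, hg⟩ := exists_continuousMap_self_referential L hLsurj
    (F := fun i t y ↦ branch N x α s m i t y) (fun i ↦ continuous_branch (hs i i.2))
    (fun i ↦ abs_div_pow_lt_one hx i.2 (hα i i.2)) (fun i t ↦ lipschitzWith_branch) hclosed
    (exists_continuousMap_endpoints_eq hlt y₁ yN)
    (fun g hg i j t u htu ↦ h.branch_eq_of_map_eq hx
      (fun t ht ↦ (congrArg g (Subtype.ext ht)).trans hg.1)
      (fun t ht ↦ (congrArg g (Subtype.ext ht)).trans hg.2) i.2 j.2 (congrArg Subtype.val htu))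
    (fun g hg k hk ↦
      ⟨by rw [← hLa, hk, hg.1]; exact h.left, by rw [← hLb, hk, hg.2]; exact h.right⟩)
  refine ⟨IccExtend hlt.le g, g.continuous.Icc_extend'.continuousOn, fun i hi t ht ↦ ?_⟩
  rw [IccExtend_of_mem _ _ (mapsTo_subintervalMap hx hi ht), IccExtend_of_mem _ _ ht]
  exact hg ⟨i, hi⟩ ⟨t, ht⟩

end SelfReferential

section Differentiation

variable {E : Type*} [NormedAddCommGroup E] [NormedSpace ℝ E] {N : ℕ} {x α : ℕ → ℝ} {m : ℕ}
  {r r' : ℕ → ℝ → E} {f g A : ℝ → E} {y₁ yN : E}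

theorem IsSelfReferential.sub_map_eq_of_hasDerivWithinAt (hx : StrictMonoOn x (Icc 1 N))
    (hg : IsSelfReferential N x α r' (m + 1) g)
    (hA : ∀ t ∈ Icc (x 1) (x N), HasDerivWithinAt A (g t) (Icc (x 1) (x N)) t) {i : ℕ}
    (hi : i ∈ Ico 1 N)
    (hr : ∀ t ∈ Icc (x 1) (x N), HasDerivWithinAt (r i) (r' i t) (Icc (x 1) (x N)) t) {t : ℝ}
    (ht : t ∈ Icc (x 1) (x N)) :
    A (subintervalMap N x i t) - A (x i) =
      branch N x α r m i t (A t) - branch N x α r m i (x 1) (A (x 1)) := by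
  have ha := (subintervalRatio_pos hx hi).ne'
  have hlt := first_lt_last (hi.1.trans_lt hi.2) hx
  have hφ : ∀ u ∈ Icc (x 1) (x N), HasDerivWithinAt
      (fun v ↦ A (subintervalMap N x i v) - branch N x α r m i v (A v)) 0 (Icc (x 1) (x N)) u := by
    intro u hu
    have hmaps := mapsTo_subintervalMap hx hi
    have hcomp := (hA _ (hmaps hu)).scomp u hasDerivAt_subintervalMap.hasDerivWithinAt hmaps
    have hbranch := (((hA u hu).const_smul (α i)).add (hr u hu)).const_smul
      (subintervalRatio N x i ^ m)⁻¹
    refine (hcomp.sub hbranch).congr_deriv ?_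
    rw [hg.map_eq i hi u hu, branch, smul_smul, sub_eq_zero]
    congr 1
    field_simp
    exact (pow_succ' _ m).symm
  have hconst := constant_of_derivWithin_zero (fun u hu ↦ (hφ u hu).differentiableWithinAt)
    (fun u hu ↦ (hφ u (Ico_subset_Icc_self hu)).derivWithin
      (uniqueDiffOn_Icc hlt u (Ico_subset_Icc_self hu))) t ht
  rw [subintervalMap_left] at hconst
  exact sub_eq_sub_iff_sub_eq_sub.1 hconst

theorem sum_div_pow_ne_one (hN : 1 < N) (hx : StrictMonoOn x (Icc 1 N))
    (hα : ∀ i ∈ Ico 1 N, |α i| < subintervalRatio N x i ^ (m + 1)) :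
    ∑ i ∈ Finset.Ico 1 N, α i / subintervalRatio N x i ^ m ≠ 1 := by
  refine ne_of_lt ?_
  rw [← sum_subintervalRatio hN hx]
  refine Finset.sum_lt_sum_of_nonempty (Finset.nonempty_Ico.2 hN) fun i hi ↦ ?_
  have hi := Finset.mem_Ico.1 hi
  rw [div_lt_iff₀ (pow_pos (subintervalRatio_pos hx hi) m), ← pow_succ']
  exact (le_abs_self _).trans_lt (hα i hi)

/- With `A` a primitive of `g`, the difference `f - A` satisfies the equation
`D (Lᵢ t) - D (x i) = βᵢ • (D t - D x₁)` with `βᵢ = αᵢ / aᵢᵐ`, hence is constant. -/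
theorem IsSelfReferential.hasDerivWithinAt [CompleteSpace E] (hN : 1 < N)
    (hx : StrictMonoOn x (Icc 1 N))
    (hα : ∀ i ∈ Ico 1 N, |α i| < subintervalRatio N x i ^ (m + 1))
    (hr : ∀ i ∈ Ico 1 N, ∀ t ∈ Icc (x 1) (x N),
      HasDerivWithinAt (r i) (r' i t) (Icc (x 1) (x N)) t)
    (hf : IsSelfReferential N x α r m f) (hg : IsSelfReferential N x α r' (m + 1) g) :
    ∀ t ∈ Icc (x 1) (x N), HasDerivWithinAt f (g t) (Icc (x 1) (x N)) t := by
  obtain ⟨A, hA⟩ := exists_hasDerivWithinAt_of_continuousOn hg.continuousOn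
  have hleft := left_mem_Icc.2 (first_lt_last hN hx).le
  have hconst : ∀ t ∈ Icc (x 1) (x N), (f - A) t = (f - A) (x 1) := by
    refine eq_left_of_sub_map_eq_smul hN hx
      (fun i hi ↦ abs_div_pow_lt_one hx hi (abs_lt_pow_of_le hx hi (hα i hi) m.le_succ))
      (sum_div_pow_ne_one hN hx hα)
      (hf.continuousOn.sub fun t ht ↦ (hA t ht).continuousWithinAt) fun i hi t ht ↦ ?_
    have hAi := hg.sub_map_eq_of_hasDerivWithinAt hx hA hi (hr i hi) ht
    have hfi := hf.map_eq i hi (x 1) hleft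
    rw [subintervalMap_left] at hfi
    calc (f - A) (subintervalMap N x i t) - (f - A) (x i)
        = f (subintervalMap N x i t) - f (x i) - (A (subintervalMap N x i t) - A (x i)) := by
          simp only [Pi.sub_apply]; abel
      _ = (branch N x α r m i t (f t) - branch N x α r m i t (A t)) -
            (branch N x α r m i (x 1) (f (x 1)) - branch N x α r m i (x 1) (A (x 1))) := by
          rw [hAi, hf.map_eq i hi t ht, hfi]; abel
      _ = (α i / subintervalRatio N x i ^ m) • ((f - A) t - (f - A) (x 1)) := by
          rw [branch_sub_branch, branch_sub_branch, ← smul_sub]; rfl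
  have hfA : EqOn f (fun t ↦ A t + (f - A) (x 1)) (Icc (x 1) (x N)) := fun t ht ↦ by
    simp only [← hconst t ht, Pi.sub_apply, add_sub_cancel]
  exact fun t ht ↦ ((hA t ht).add_const _).congr hfA (hfA ht)

theorem IsSelfReferential.differentiableOn_and_derivWithin [CompleteSpace E] (hN : 1 < N)
    (hx : StrictMonoOn x (Icc 1 N))
    (hα : ∀ i ∈ Ico 1 N, |α i| < subintervalRatio N x i ^ (m + 1))
    (hr : ∀ i ∈ Ico 1 N, ∀ t ∈ Icc (x 1) (x N),
      HasDerivWithinAt (r i) (r' i t) (Icc (x 1) (x N)) t)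
    (hr' : ∀ i ∈ Ico 1 N, ContinuousOn (r' i) (Icc (x 1) (x N)))
    (hjoin : JoinUp N x α r' (m + 1) y₁ yN) (hf : IsSelfReferential N x α r m f) :
    DifferentiableOn ℝ f (Icc (x 1) (x N)) ∧
      IsSelfReferential N x α r' (m + 1) (derivWithin f (Icc (x 1) (x N))) := by
  obtain ⟨g, hg⟩ := hjoin.exists_isSelfReferential hN hx hα hr'
  have hfg := hf.hasDerivWithinAt hN hx hα hr hg
  have heq : EqOn (derivWithin f (Icc (x 1) (x N))) g (Icc (x 1) (x N)) := fun t ht ↦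
    (hfg t ht).derivWithin (uniqueDiffOn_Icc (first_lt_last hN hx) t ht)
  refine ⟨fun t ht ↦ (hfg t ht).differentiableWithinAt, hg.continuousOn.congr heq,
    fun i hi t ht ↦ ?_⟩
  rw [heq (mapsTo_subintervalMap hx hi ht), heq ht, hg.map_eq i hi t ht]

end Differentiation

section HigherDerivatives

variable {E : Type*} [NormedAddCommGroup E] [NormedSpace ℝ E] [CompleteSpace E] {N p : ℕ}
  {x α : ℕ → ℝ} {q : ℕ → ℕ → ℝ → E} {Ψ : ℝ → E} {y₁ yN : ℕ → E}

theorem IsSelfReferential.contDiffOn_and_iteratedDerivWithin (hN : 1 < N)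
    (hx : StrictMonoOn x (Icc 1 N))
    (hα : ∀ i ∈ Ico 1 N, |α i| < subintervalRatio N x i ^ p)
    (hq : ∀ m < p, ∀ i ∈ Ico 1 N, ∀ t ∈ Icc (x 1) (x N),
      HasDerivWithinAt (q m i) (q (m + 1) i t) (Icc (x 1) (x N)) t)
    (hqc : ∀ i ∈ Ico 1 N, ContinuousOn (q p i) (Icc (x 1) (x N)))
    (hjoin : ∀ m < p, JoinUp N x α (q (m + 1)) (m + 1) (y₁ (m + 1)) (yN (m + 1)))
    (hΨ : IsSelfReferential N x α (q 0) 0 Ψ) :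
    ContDiffOn ℝ p Ψ (Icc (x 1) (x N)) ∧ ∀ m ≤ p,
      IsSelfReferential N x α (q m) m (iteratedDerivWithin m Ψ (Icc (x 1) (x N))) := by
  have hcont : ∀ m ≤ p, ∀ i ∈ Ico 1 N, ContinuousOn (q m i) (Icc (x 1) (x N)) := by
    intro m hm i hi
    rcases hm.eq_or_lt with rfl | hm
    · exact hqc i hi
    · exact fun t ht ↦ (hq m hm i hi t ht).continuousWithinAt
  have hstep (m : ℕ) (hm : m < p) {f : ℝ → E} (hf : IsSelfReferential N x α (q m) m f) :=
    hf.differentiableOn_and_derivWithin hN hx (fun i hi ↦ abs_lt_pow_of_le hx hi (hα i hi) hm)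
      (hq m hm) (hcont (m + 1) hm) (hjoin m hm)
  have hself : ∀ m ≤ p,
      IsSelfReferential N x α (q m) m (iteratedDerivWithin m Ψ (Icc (x 1) (x N))) := by
    intro m hm
    induction m with
    | zero => rwa [iteratedDerivWithin_zero]
    | succ m ih =>
      rw [iteratedDerivWithin_succ]
      exact (hstep m hm (ih (m.le_succ.trans hm))).2
  refine ⟨contDiffOn_of_continuousOn_differentiableOn_deriv (fun m hm ↦ ?_) fun m hm ↦ ?_, hself⟩
  · exact (hself m (mod_cast hm)).continuousOn
  · have hm : m < p := mod_cast hm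
    exact (hstep m hm (hself m hm.le)).1

end HigherDerivatives

end FractalInterpolation

open FractalInterpolation

theorem stmt_2_general {E : Type*} [NormedAddCommGroup E] [NormedSpace ℝ E] [CompleteSpace E]
    (N : ℕ) (hN : 1 < N) (p : ℕ) (x : ℕ → ℝ) (hx : ∀ i, 1 ≤ i → i < N → x i < x (i + 1))
    (a : ℕ → ℝ) (ha : ∀ i, a i = (x (i + 1) - x i) / (x N - x 1))
    (L : ℕ → ℝ → ℝ)
    (hL : ∀ i, 1 ≤ i → i < N → ∀ t : ℝ, L i t =
      a i * t + (x N * x i - x 1 * x (i + 1)) / (x N - x 1))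
    (α : ℕ → ℝ) (q : ℕ → ℕ → ℝ → E)
    (hq : ∀ m < p, ∀ i, 1 ≤ i → i < N → ∀ t ∈ Icc (x 1) (x N),
      HasDerivWithinAt (q m i) (q (m + 1) i t) (Icc (x 1) (x N)) t)
    (hqc : ∀ i, 1 ≤ i → i < N → ContinuousOn (q p i) (Icc (x 1) (x N)))
    (hα : ∀ i, 1 ≤ i → i < N → |α i| < a i ^ p)
    (y1m yNm : ℕ → E)
    (hy1m : ∀ m, 1 ≤ m → m ≤ p → y1m m = (a 1 ^ m - α 1)⁻¹ • q m 1 (x 1))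
    (hyNm : ∀ m, 1 ≤ m → m ≤ p → yNm m = (a (N - 1) ^ m - α (N - 1))⁻¹ • q m (N - 1) (x N))
    (hjoin : ∀ i, 2 ≤ i → i < N → ∀ m, 1 ≤ m → m ≤ p →
      (a (i - 1) ^ m)⁻¹ • (α (i - 1) • yNm m + q m (i - 1) (x N)) =
        (a i ^ m)⁻¹ • (α i • y1m m + q m i (x 1)))
    (Ψ : ℝ → E) (hΨc : ContinuousOn Ψ (Icc (x 1) (x N)))
    (hΨ : ∀ i, 1 ≤ i → i < N → ∀ t ∈ Icc (x 1) (x N), Ψ (L i t) = α i • Ψ t + q 0 i t) :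
    ContDiffOn ℝ p Ψ (Icc (x 1) (x N)) ∧
    ∀ m, 1 ≤ m → m ≤ p →
      (ContinuousOn (iteratedDerivWithin m Ψ (Icc (x 1) (x N))) (Icc (x 1) (x N)) ∧
        (∀ i, 1 ≤ i → i < N → ∀ t ∈ Icc (x 1) (x N),
          iteratedDerivWithin m Ψ (Icc (x 1) (x N)) (L i t) =
            (a i ^ m)⁻¹ • (α i • iteratedDerivWithin m Ψ (Icc (x 1) (x N)) t + q m i t)) ∧
        (∀ g : ℝ → E, ContinuousOn g (Icc (x 1) (x N)) →
          (∀ i, 1 ≤ i → i < N → ∀ t ∈ Icc (x 1) (x N),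
            g (L i t) = (a i ^ m)⁻¹ • (α i • g t + q m i t)) →
          EqOn g (iteratedDerivWithin m Ψ (Icc (x 1) (x N))) (Icc (x 1) (x N)))) := by
  obtain rfl : a = subintervalRatio N x := funext ha
  have hx : StrictMonoOn x (Icc 1 N) := strictMonoOn_of_lt_add_one ordConnected_Icc
    fun i _ hi hi' ↦ hx i hi.1 hi'.2
  have hLmap (i : ℕ) (hi : 1 ≤ i) (hiN : i < N) (t : ℝ) : L i t = subintervalMap N x i t :=
    (hL i hi hiN t).trans (subintervalMap_eq hN hx).symm
  have hself {m : ℕ} {f : ℝ → E} : IsSelfReferential N x α (q m) m f ↔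
      ContinuousOn f (Icc (x 1) (x N)) ∧ ∀ i, 1 ≤ i → i < N → ∀ t ∈ Icc (x 1) (x N),
        f (L i t) = (subintervalRatio N x i ^ m)⁻¹ • (α i • f t + q m i t) :=
    ⟨fun h ↦ ⟨h.1, fun i hi hiN t ht ↦ hLmap i hi hiN t ▸ h.2 i ⟨hi, hiN⟩ t ht⟩,
      fun h ↦ ⟨h.1, fun i hi t ht ↦ hLmap i hi.1 hi.2 t ▸ h.2 i hi.1 hi.2 t ht⟩⟩
  have hα : ∀ m ≤ p, ∀ i ∈ Ico 1 N, |α i| < subintervalRatio N x i ^ m :=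
    fun m hm i hi ↦ abs_lt_pow_of_le hx hi (hα i hi.1 hi.2) hm
  have hjoinUp (m : ℕ) (hm : m < p) :
      JoinUp N x α (q (m + 1)) (m + 1) (y1m (m + 1)) (yNm (m + 1)) :=
    joinUp_of_eq hN hx (hα (m + 1) hm) (hy1m _ m.succ_pos hm) (hyNm _ m.succ_pos hm)
      fun i hi ↦ hjoin i hi.1 hi.2 _ m.succ_pos hm
  have hΨself : IsSelfReferential N x α (q 0) 0 Ψ := hself.2 ⟨hΨc, by simpa using hΨ⟩
  obtain ⟨hcontDiff, hderiv⟩ := hΨself.contDiffOn_and_iteratedDerivWithin hN hx (hα p le_rfl)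
    (fun m hm i hi ↦ hq m hm i hi.1 hi.2) (fun i hi ↦ hqc i hi.1 hi.2) hjoinUp
  refine ⟨hcontDiff, fun m _ hm ↦ ⟨(hself.1 (hderiv m hm)).1, (hself.1 (hderiv m hm)).2, ?_⟩⟩
  exact fun g hgc hg ↦ (hself.2 ⟨hgc, hg⟩).eqOn hN hx (hα m hm) (hderiv m hm)

/-- (Barnsley–Harrington type result for rational FIFs.)
If `Fᵢ(x,y) = αᵢ y + qᵢ(x)` with `qᵢ = Pᵢ/Qᵢ` rational, `Qᵢ ≠ 0` on `I`,
`|αᵢ| < aᵢᵖ`, and the join-up conditions `F_{i-1,m}(x_N, y_{N,m}) = F_{i,m}(x₁, y_{1,m})`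
hold for `i = 2,…,N-1`, `m = 1,…,p`, then the FIF `Ψ` is `p` times continuously
differentiable on `I`, and `Ψ⁽ᵐ⁾` is the unique continuous solution of
`Ψ⁽ᵐ⁾(Lᵢ(x)) = (αᵢ Ψ⁽ᵐ⁾(x) + qᵢ⁽ᵐ⁾(x))/aᵢᵐ`. -/
theorem stmt_2
    (N : ℕ) (hN : 2 < N) (p : ℕ)
    (x : ℕ → ℝ)
    (hx : ∀ i, 1 ≤ i → i < N → x i < x (i + 1))
    (a : ℕ → ℝ)
    (ha : ∀ i, a i = (x (i + 1) - x i) / (x N - x 1))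
    (L : ℕ → ℝ → ℝ)
    (hL : ∀ i, 1 ≤ i → i < N → ∀ t : ℝ, L i t =
      a i * t + (x N * x i - x 1 * x (i + 1)) / (x N - x 1))
    (α : ℕ → ℝ)
    (P Q : ℕ → Polynomial ℝ)
    (q : ℕ → ℝ → ℝ)
    (hq : ∀ i, 1 ≤ i → i < N → ∀ t : ℝ, q i t = (P i).eval t / (Q i).eval t)
    (hQ : ∀ i, 1 ≤ i → i < N → ∀ t ∈ Set.Icc (x 1) (x N), (Q i).eval t ≠ 0)
    (hα : ∀ i, 1 ≤ i → i < N → |α i| < (a i) ^ p)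
    (y1m yNm : ℕ → ℝ)
    (hy1m : ∀ m, 1 ≤ m → m ≤ p →
      y1m m = iteratedDeriv m (q 1) (x 1) / ((a 1) ^ m - α 1))
    (hyNm : ∀ m, 1 ≤ m → m ≤ p →
      yNm m = iteratedDeriv m (q (N - 1)) (x N) / ((a (N - 1)) ^ m - α (N - 1)))
    (hjoin : ∀ i, 2 ≤ i → i < N → ∀ m, 1 ≤ m → m ≤ p →
      (α (i - 1) * yNm m + iteratedDeriv m (q (i - 1)) (x N)) / (a (i - 1)) ^ m =
        (α i * y1m m + iteratedDeriv m (q i) (x 1)) / (a i) ^ m)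
    (Ψ : ℝ → ℝ)
    (hΨc : ContinuousOn Ψ (Set.Icc (x 1) (x N)))
    (hΨ : ∀ i, 1 ≤ i → i < N → ∀ t ∈ Set.Icc (x 1) (x N),
      Ψ (L i t) = α i * Ψ t + q i t) :
    ContDiffOn ℝ p Ψ (Set.Icc (x 1) (x N)) ∧
    ∀ m, 1 ≤ m → m ≤ p →
      (ContinuousOn (iteratedDerivWithin m Ψ (Set.Icc (x 1) (x N)))
          (Set.Icc (x 1) (x N)) ∧
        (∀ i, 1 ≤ i → i < N → ∀ t ∈ Set.Icc (x 1) (x N),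
          iteratedDerivWithin m Ψ (Set.Icc (x 1) (x N)) (L i t) =
            (α i * iteratedDerivWithin m Ψ (Set.Icc (x 1) (x N)) t
              + iteratedDeriv m (q i) t) / (a i) ^ m) ∧
        (∀ g : ℝ → ℝ, ContinuousOn g (Set.Icc (x 1) (x N)) →
          (∀ i, 1 ≤ i → i < N → ∀ t ∈ Set.Icc (x 1) (x N),
            g (L i t) = (α i * g t + iteratedDeriv m (q i) t) / (a i) ^ m) →
          Set.EqOn g (iteratedDerivWithin m Ψ (Set.Icc (x 1) (x N)))
            (Set.Icc (x 1) (x N)))) := by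
  have hderiv (m i : ℕ) (hi : 1 ≤ i) (hiN : i < N) (t : ℝ) (ht : t ∈ Icc (x 1) (x N)) :
      HasDerivAt (iteratedDeriv m (q i)) (iteratedDeriv (m + 1) (q i) t) t := by
    rw [funext (hq i hi hiN)]
    exact hasDerivAt_iteratedDeriv (contDiffAt_eval_div_eval (P i) (Q i) (hQ i hi hiN t ht))
      (WithTop.coe_lt_coe.2 (ENat.natCast_lt_top m))
  simpa only [smul_eq_mul, ← div_eq_inv_mul] using stmt_2_general N (by omega) p x hx a ha L hL α
    (fun m i ↦ iteratedDeriv m (q i))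
    (fun m _ i hi hiN t ht ↦ (hderiv m i hi hiN t ht).hasDerivWithinAt)
    (fun i hi hiN t ht ↦ (hderiv p i hi hiN t ht).continuousAt.continuousWithinAt) hα y1m yNm
    (by simpa only [smul_eq_mul, ← div_eq_inv_mul] using hy1m)
    (by simpa only [smul_eq_mul, ← div_eq_inv_mul] using hyNm)
    (by simpa only [smul_eq_mul, ← div_eq_inv_mul] using hjoin) Ψ hΨc
    (by simpa only [smul_eq_mul, iteratedDeriv_zero] using hΨ)
end

section
/- Let {(x_i, y_i, d_i) : i = 1,...,N} be given data with x_1 < x_2 < ... < x_N and y_i > 0 for all i. If the scaling factors satisfy α_i ∈ [0, min{a_i, y_i/y_1, y_{i+1}/y_N}) for each i = 1,...,N−1, and the shape parameters satisfy u_i > 0 and v_i ≥ max{0, −u_i[3 + (h_i d_i − α_i (x_N − x_1) d_1)/(y_i − α_i y_1)], −u_i[3 + (−h_i d_{i+1} + α_i (x_N − x_1) d_N)/(y_{i+1} − α_i y_N)]}, then the corresponding rational cubic spline fractal interpolation function Ψ satisfies Ψ(x) > 0 for all x ∈ I = [x_1, x_N]. -/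
/-!
The self-referential equation `Ψ (L i t) = α i * Ψ t + q i t` expresses the value of `Ψ` at any
point of `I` through its value at some point of `I`. If `0 ≤ α i < 1` and all the `q i` are
positive, then every negative lower bound `m` of `Ψ` improves to `max α * m > m`; hence `Ψ ≥ 0`,
and one more application of the equation gives `Ψ > 0`. Positivity of `q i` is read off its
coefficients in the basis `θ ^ k * (1 - θ) ^ (3 - k)`: the bounds on `v i` say precisely that the
two middle ones are nonnegative.
-/

open Set

section SelfReferential

variable {X : Type*} {s : Set X} {f : X → ℝ}

theorem nonneg_of_exists_mul_le {c : ℝ} (hc : c < 1) (hbdd : BddBelow (f '' s))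
    (h : ∀ t ∈ s, ∃ t' ∈ s, ∃ k, 0 ≤ k ∧ k ≤ c ∧ k * f t' ≤ f t) :
    ∀ t ∈ s, 0 ≤ f t := by
  intro t ht
  suffices 0 ≤ sInf (f '' s) from this.trans (csInf_le hbdd (mem_image_of_mem f ht))
  by_contra! hneg
  have improved_bound : c * sInf (f '' s) ≤ sInf (f '' s) := by
    refine le_csInf ⟨f t, mem_image_of_mem f ht⟩ (forall_mem_image.2 fun r hr => ?_)
    obtain ⟨r', hr', k, hk, hkc, hle⟩ := h r hr
    calc c * sInf (f '' s) ≤ k * sInf (f '' s) := mul_le_mul_of_nonpos_right hkc hneg.le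
      _ ≤ k * f r' := mul_le_mul_of_nonneg_left (csInf_le hbdd (mem_image_of_mem f hr')) hk
      _ ≤ f r := hle
  exact improved_bound.not_gt (lt_mul_of_lt_one_left hneg hc)

theorem pos_of_selfReferential {ι : Type*} {J : Finset ι} {L : ι → X → X} {α : ι → ℝ}
    {q : ι → X → ℝ} (hcover : ∀ t ∈ s, ∃ i ∈ J, t ∈ L i '' s)
    (hα : ∀ i ∈ J, 0 ≤ α i ∧ α i < 1) (hq : ∀ i ∈ J, ∀ t ∈ s, 0 < q i t)
    (hbdd : BddBelow (f '' s)) (hf : ∀ i ∈ J, ∀ t ∈ s, f (L i t) = α i * f t + q i t) :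
    ∀ t ∈ s, 0 < f t := by
  intro t ht
  have hJ : J.Nonempty := (hcover t ht).imp fun _ h => h.1
  obtain ⟨j, hj, hmax⟩ := J.exists_max_image α hJ
  have hnonneg : ∀ r ∈ s, 0 ≤ f r := by
    refine nonneg_of_exists_mul_le (hα j hj).2 hbdd fun r hr => ?_
    obtain ⟨i, hi, r', hr', rfl⟩ := hcover r hr
    refine ⟨r', hr', α i, (hα i hi).1, hmax i hi, ?_⟩
    linarith [hf i hi r' hr', hq i hi r' hr']
  obtain ⟨i, hi, t', ht', rfl⟩ := hcover t ht
  rw [hf i hi t' ht']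
  exact add_pos_of_nonneg_of_pos (mul_nonneg (hα i hi).1 (hnonneg t' ht')) (hq i hi t' ht')

end SelfReferential

section Knots

theorem exists_mem_Icc_consecutive {X : Type*} [LinearOrder X] {x : ℕ → X} {m n : ℕ} (hmn : m < n)
    {t : X} (ht : t ∈ Icc (x m) (x n)) : ∃ i, m ≤ i ∧ i < n ∧ t ∈ Icc (x i) (x (i + 1)) := by
  induction n, hmn using Nat.le_induction with
  | base => exact ⟨m, le_rfl, m.lt_succ_self, ht⟩
  | succ k hk ih =>
    rcases le_total t (x k) with htk | hkt
    · obtain ⟨i, hmi, hik, hti⟩ := ih ⟨ht.1, htk⟩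
      exact ⟨i, hmi, hik.trans k.lt_succ_self, hti⟩
    · exact ⟨k, (Nat.le_succ m).trans hk, k.lt_succ_self, hkt, ht.2⟩

theorem strictMonoOn_Icc_of_lt_add_one {X : Type*} [Preorder X] {x : ℕ → X} {m n : ℕ}
    (hx : ∀ i, m ≤ i → i < n → x i < x (i + 1)) : StrictMonoOn x (Icc m n) :=
  strictMonoOn_of_lt_add_one ordConnected_Icc fun i _ hi hi' => hx i hi.1 hi'.2

variable {K : Type*} [Field K] [LinearOrder K] [IsStrictOrderedRing K]

theorem knot_spacing_div_le_one {x : ℕ → K} {m n i : ℕ}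
    (hx : ∀ i, m ≤ i → i < n → x i < x (i + 1)) (hmi : m ≤ i) (hin : i < n) :
    (x (i + 1) - x i) / (x n - x m) ≤ 1 := by
  have hmono := (strictMonoOn_Icc_of_lt_add_one hx).monotoneOn
  have hleft : x m ≤ x i := hmono ⟨le_rfl, by lia⟩ ⟨hmi, hin.le⟩ hmi
  have hright : x (i + 1) ≤ x n := hmono ⟨by lia, hin⟩ ⟨by lia, le_rfl⟩ hin
  exact div_le_one_of_le₀ (sub_le_sub hright hleft)
    (sub_nonneg.2 (hleft.trans ((hx i hmi hin).le.trans hright)))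

theorem image_Icc_of_affine_endpoints {p r c d : K} (hpr : p < r) (hcd : c < d) :
    (fun t => (d - c) / (r - p) * t + (r * c - p * d) / (r - p)) '' Icc p r = Icc c d := by
  have hne : r - p ≠ 0 := (sub_pos.2 hpr).ne'
  rw [image_affine_Icc' (div_pos (sub_pos.2 hcd) (sub_pos.2 hpr))]
  congr 1 <;> field_simp <;> ring

end Knots

section RationalCubic

variable {K : Type*} [Field K]

/-- The rational cubic Hermite interpolant on `[0, 1]` with shape parameters `u`, `v`, end values
`p₀`, `p₁` and end slopes `m₀`, `m₁`. The function `q i` of the spline is of this form in the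
variable `θ`, with `p₀ = y i - α i * y 1` and `m₀ = h i * d i - α i * (x N - x 1) * d 1`, and
correspondingly at the right end. -/
def rationalCubicHermite (u v p₀ p₁ m₀ m₁ θ : K) : K :=
  (u * p₀ * (1 - θ) ^ 3 + ((3 * u + v) * p₀ + u * m₀) * θ * (1 - θ) ^ 2
    + ((3 * u + v) * p₁ - u * m₁) * θ ^ 2 * (1 - θ) + u * p₁ * θ ^ 3) / (u + v * θ * (1 - θ))

variable [LinearOrder K] [IsStrictOrderedRing K]

theorem cubic_pos_of_coeff {U V W Z θ : K} (hU : 0 < U) (hV : 0 ≤ V) (hW : 0 ≤ W) (hZ : 0 < Z)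
    (hθ : θ ∈ Icc 0 1) :
    0 < U * (1 - θ) ^ 3 + V * θ * (1 - θ) ^ 2 + W * θ ^ 2 * (1 - θ) + Z * θ ^ 3 := by
  obtain ⟨hθ₀, hθ₁⟩ := hθ
  have hθ' : 0 ≤ 1 - θ := sub_nonneg.2 hθ₁
  have hends : 0 < U * (1 - θ) ^ 3 + Z * θ ^ 3 := by
    rcases hθ₀.eq_or_lt with rfl | hpos
    · simpa using hU
    · positivity
  have hV' : 0 ≤ V * θ * (1 - θ) ^ 2 := by positivity
  have hW' : 0 ≤ W * θ ^ 2 * (1 - θ) := by positivity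
  linarith

theorem middle_coeff_nonneg {u v p m : K} (hp : 0 < p) (hv : -u * (3 + m / p) ≤ v) :
    0 ≤ (3 * u + v) * p + u * m := by
  have hsum : 0 ≤ v + u * (3 + m / p) := by linarith
  calc 0 ≤ (v + u * (3 + m / p)) * p := mul_nonneg hsum hp.le
    _ = (3 * u + v) * p + u * m := by field_simp; ring

theorem rationalCubicHermite_pos {u v p₀ p₁ m₀ m₁ θ : K} (hu : 0 < u) (hv : 0 ≤ v)
    (hp₀ : 0 < p₀) (hp₁ : 0 < p₁) (hv₀ : -u * (3 + m₀ / p₀) ≤ v) (hv₁ : -u * (3 + -m₁ / p₁) ≤ v)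
    (hθ : θ ∈ Icc 0 1) : 0 < rationalCubicHermite u v p₀ p₁ m₀ m₁ θ := by
  have hW : 0 ≤ (3 * u + v) * p₁ - u * m₁ := by
    simpa only [mul_neg, ← sub_eq_add_neg] using middle_coeff_nonneg hp₁ hv₁
  have hden : 0 ≤ v * θ * (1 - θ) := mul_nonneg (mul_nonneg hv hθ.1) (sub_nonneg.2 hθ.2)
  exact div_pos
    (cubic_pos_of_coeff (mul_pos hu hp₀) (middle_coeff_nonneg hp₀ hv₀) hW (mul_pos hu hp₁) hθ)
    (add_pos_of_pos_of_nonneg hu hden)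

end RationalCubic

theorem stmt_4_general
    (N : ℕ) (hN : 1 < N)
    (x y d : ℕ → ℝ)
    (hx : ∀ i, 1 ≤ i → i < N → x i < x (i + 1))
    (hy₁ : 0 < y 1) (hyN : 0 < y N)
    (a : ℕ → ℝ) (ha : ∀ i, a i = (x (i + 1) - x i) / (x N - x 1))
    (L : ℕ → ℝ → ℝ)
    (hL : ∀ i, 1 ≤ i → i < N → ∀ t : ℝ, L i t =
      a i * t + (x N * x i - x 1 * x (i + 1)) / (x N - x 1))
    (α u v : ℕ → ℝ)
    (hα : ∀ i, 1 ≤ i → i < N →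
      0 ≤ α i ∧ α i < min 1 (min (y i / y 1) (y (i + 1) / y N)))
    (hu : ∀ i, 1 ≤ i → i < N → 0 < u i)
    (hv : ∀ i, 1 ≤ i → i < N →
      max 0 (max
        (-(u i) * (3 + ((x (i + 1) - x i) * d i - α i * (x N - x 1) * d 1)
          / (y i - α i * y 1)))
        (-(u i) * (3 + (-(x (i + 1) - x i) * d (i + 1) + α i * (x N - x 1) * d N)
          / (y (i + 1) - α i * y N)))) ≤ v i)
    (U V W Z : ℕ → ℝ)
    (hU : ∀ i, U i = u i * (y i - α i * y 1))
    (hV : ∀ i, V i = (3 * u i + v i) * (y i - α i * y 1)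
      + u i * (x (i + 1) - x i) * d i - α i * u i * (x N - x 1) * d 1)
    (hW : ∀ i, W i = (3 * u i + v i) * (y (i + 1) - α i * y N)
      - u i * (x (i + 1) - x i) * d (i + 1) + α i * u i * (x N - x 1) * d N)
    (hZ : ∀ i, Z i = u i * (y (i + 1) - α i * y N))
    (q : ℕ → ℝ → ℝ)
    (hq : ∀ (i : ℕ) (t θ : ℝ), θ = (t - x 1) / (x N - x 1) →
      q i t = (U i * (1 - θ) ^ 3 + V i * θ * (1 - θ) ^ 2
        + W i * θ ^ 2 * (1 - θ) + Z i * θ ^ 3) / (u i + v i * θ * (1 - θ)))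
    (Ψ : ℝ → ℝ)
    (hΨb : BddBelow (Ψ '' Set.Icc (x 1) (x N)))
    (hΨ : ∀ i, 1 ≤ i → i < N → ∀ t ∈ Set.Icc (x 1) (x N),
      Ψ (L i t) = α i * Ψ t + q i t) :
    ∀ t ∈ Set.Icc (x 1) (x N), 0 < Ψ t := by
  have hI : x 1 < x N :=
    strictMonoOn_Icc_of_lt_add_one hx ⟨le_rfl, hN.le⟩ ⟨hN.le, le_rfl⟩ hN
  refine pos_of_selfReferential (J := Finset.Ico 1 N) (L := L) (α := α) (q := q)
    (fun t ht => ?_) (fun i hi => ?_) (fun i hi t ht => ?_) hΨb fun i hi => ?_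
  · obtain ⟨i, hi, hiN, hti⟩ := exists_mem_Icc_consecutive hN ht
    refine ⟨i, Finset.mem_Ico.2 ⟨hi, hiN⟩, ?_⟩
    rwa [funext (hL i hi hiN), ha, image_Icc_of_affine_endpoints hI (hx i hi hiN)]
  all_goals obtain ⟨hi, hiN⟩ := Finset.mem_Ico.1 hi
  · exact ⟨(hα i hi hiN).1, (hα i hi hiN).2.trans_le (min_le_left _ _)⟩
  · obtain ⟨-, hα₁, hαN⟩ := by simpa only [lt_min_iff] using (hα i hi hiN).2
    obtain ⟨hv₀, hv₁, hv₂⟩ := by simpa only [max_le_iff] using hv i hi hiN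
    have hp₀ : 0 < y i - α i * y 1 := sub_pos.2 ((lt_div_iff₀ hy₁).1 hα₁)
    have hp₁ : 0 < y (i + 1) - α i * y N := sub_pos.2 ((lt_div_iff₀ hyN).1 hαN)
    have hθ : (t - x 1) / (x N - x 1) ∈ Icc (0 : ℝ) 1 :=
      ⟨div_nonneg (sub_nonneg.2 ht.1) (sub_pos.2 hI).le,
        div_le_one_of_le₀ (sub_le_sub_right ht.2 _) (sub_pos.2 hI).le⟩
    have hq_eq : q i t = rationalCubicHermite (u i) (v i) (y i - α i * y 1) (y (i + 1) - α i * y N)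
        ((x (i + 1) - x i) * d i - α i * (x N - x 1) * d 1)
        ((x (i + 1) - x i) * d (i + 1) - α i * (x N - x 1) * d N)
        ((t - x 1) / (x N - x 1)) := by
      rw [hq i t _ rfl, hU, hV, hW, hZ, rationalCubicHermite]
      ring
    rw [hq_eq]
    exact rationalCubicHermite_pos (hu i hi hiN) hv₀ hp₀ hp₁ hv₁ (by convert hv₂ using 4; ring) hθ
  · exact hΨ i hi hiN

/-- Positivity preservation. If the data is positive,
`αᵢ ∈ [0, min{aᵢ, yᵢ/y₁, y_{i+1}/y_N})`, `uᵢ > 0` and `vᵢ` is at least the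
stated maximum, then the rational cubic spline FIF `Ψ` is positive on `I`. -/
theorem stmt_4
    (N : ℕ) (hN : 2 < N)
    (x y d : ℕ → ℝ)
    (hx : ∀ i, 1 ≤ i → i < N → x i < x (i + 1))
    (hy : ∀ i, 1 ≤ i → i ≤ N → 0 < y i)
    (a : ℕ → ℝ) (ha : ∀ i, a i = (x (i + 1) - x i) / (x N - x 1))
    (L : ℕ → ℝ → ℝ)
    (hL : ∀ i, 1 ≤ i → i < N → ∀ t : ℝ, L i t =
      a i * t + (x N * x i - x 1 * x (i + 1)) / (x N - x 1))
    (α u v : ℕ → ℝ)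
    (hα : ∀ i, 1 ≤ i → i < N →
      0 ≤ α i ∧ α i < min (a i) (min (y i / y 1) (y (i + 1) / y N)))
    (hu : ∀ i, 1 ≤ i → i < N → 0 < u i)
    (hv : ∀ i, 1 ≤ i → i < N →
      max 0 (max
        (-(u i) * (3 + ((x (i + 1) - x i) * d i - α i * (x N - x 1) * d 1)
          / (y i - α i * y 1)))
        (-(u i) * (3 + (-(x (i + 1) - x i) * d (i + 1) + α i * (x N - x 1) * d N)
          / (y (i + 1) - α i * y N)))) ≤ v i)
    (U V W Z : ℕ → ℝ)
    (hU : ∀ i, U i = u i * (y i - α i * y 1))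
    (hV : ∀ i, V i = (3 * u i + v i) * (y i - α i * y 1)
      + u i * (x (i + 1) - x i) * d i - α i * u i * (x N - x 1) * d 1)
    (hW : ∀ i, W i = (3 * u i + v i) * (y (i + 1) - α i * y N)
      - u i * (x (i + 1) - x i) * d (i + 1) + α i * u i * (x N - x 1) * d N)
    (hZ : ∀ i, Z i = u i * (y (i + 1) - α i * y N))
    (q : ℕ → ℝ → ℝ)
    (hq : ∀ (i : ℕ) (t θ : ℝ), θ = (t - x 1) / (x N - x 1) →
      q i t = (U i * (1 - θ) ^ 3 + V i * θ * (1 - θ) ^ 2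
        + W i * θ ^ 2 * (1 - θ) + Z i * θ ^ 3) / (u i + v i * θ * (1 - θ)))
    (Ψ : ℝ → ℝ)
    (hΨc : ContinuousOn Ψ (Set.Icc (x 1) (x N)))
    (hΨ : ∀ i, 1 ≤ i → i < N → ∀ t ∈ Set.Icc (x 1) (x N),
      Ψ (L i t) = α i * Ψ t + q i t)
    (hΨy : ∀ i, 1 ≤ i → i ≤ N → Ψ (x i) = y i) :
    ∀ t ∈ Set.Icc (x 1) (x N), 0 < Ψ t :=
  stmt_4_general N (by lia) x y d hx (hy 1 le_rfl (by lia)) (hy N (by lia) le_rfl) a ha L hL α u v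
    (fun i hi hiN => ⟨(hα i hi hiN).1, (hα i hi hiN).2.trans_le
      (min_le_min_right _ ((ha i).trans_le (knot_spacing_div_le_one hx hi hiN)))⟩)
    hu hv U V W Z hU hV hW hZ q hq Ψ (isCompact_Icc.bddBelow_image hΨc) hΨ
end

section
/- Under the hypotheses y_i > 0 for all i, α_i ∈ [0, min{a_i, y_i/y_1, y_{i+1}/y_N}), u_i > 0 and v_i ≥ max{0, −u_i[3 + (h_i d_i − α_i (x_N − x_1) d_1)/(y_i − α_i y_1)], −u_i[3 + (−h_i d_{i+1} + α_i (x_N − x_1) d_N)/(y_{i+1} − α_i y_N)]}, the coefficients of the rational cubic q_i satisfy U_i > 0, Z_i > 0, V_i ≥ 0 and W_i ≥ 0, and consequently q_i(x) > 0 for all x ∈ I = [x_1, x_N]. -/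
/-! Put `A = yᵢ - αᵢ y₁` and `B = hᵢ dᵢ - αᵢ (x_N - x₁) d₁`. Then `U = u A` and
`V = (3 u + v) A + u B`, and `W`, `Z` have the same form at the other end. The bounds on `α` say
that `A` is positive at both ends, so that dividing by `A` turns `0 ≤ V` into
`-u (3 + B / A) ≤ v`: the lower bounds on `v` are exactly the nonnegativity of `V` and `W`.
A cubic whose Bernstein coefficients are nonnegative, with positive outer ones, is positive on
`[0, 1]`. -/

section

variable {K : Type*} [Field K]

/-- The rational cubic in the parameter `θ ∈ [0, 1]`, with Bernstein coefficients `U, V, W, Z`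
(the binomial factors are absorbed into `V` and `W`) and shape parameters `u, v`. -/
def rationalCubic (u v U V W Z θ : K) : K :=
  (U * (1 - θ) ^ 3 + V * θ * (1 - θ) ^ 2 + W * θ ^ 2 * (1 - θ) + Z * θ ^ 3) /
    (u + v * θ * (1 - θ))

variable [LinearOrder K] [IsStrictOrderedRing K]

theorem neg_mul_add_div_le_iff {A : K} (hA : 0 < A) (B c u v : K) :
    -u * (c + B / A) ≤ v ↔ 0 ≤ (c * u + v) * A + u * B := by
  have clear_denominator :
      (c * u + v) * A + u * B = (v - -u * (c + B / A)) * A := by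
    field_simp
    ring
  rw [clear_denominator, mul_nonneg_iff_of_pos_right hA, sub_nonneg]

theorem sub_div_sub_mem_Icc_zero_one {a b t : K} (hab : a < b) (ht : t ∈ Set.Icc a b) :
    (t - a) / (b - a) ∈ Set.Icc 0 1 := by
  have hba : 0 < b - a := sub_pos.2 hab
  exact ⟨div_nonneg (sub_nonneg.2 ht.1) hba.le,
    (div_le_one hba).2 (sub_le_sub_right ht.2 a)⟩

theorem binaryCubicForm_pos {R : Type*} [CommSemiring R] [PartialOrder R] [IsStrictOrderedRing R]
    {U V W Z s t : R} (hU : 0 < U) (hV : 0 ≤ V) (hW : 0 ≤ W) (hZ : 0 < Z)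
    (hs : 0 ≤ s) (ht : 0 ≤ t) (hst : 0 < s + t) :
    0 < U * s ^ 3 + V * t * s ^ 2 + W * t ^ 2 * s + Z * t ^ 3 := by
  rcases hs.eq_or_lt with rfl | hs
  · rw [zero_add] at hst
    positivity
  · positivity

theorem rationalCubic_pos {u v U V W Z θ : K} (hu : 0 < u) (hv : 0 ≤ v)
    (hU : 0 < U) (hV : 0 ≤ V) (hW : 0 ≤ W) (hZ : 0 < Z) (hθ : θ ∈ Set.Icc 0 1) :
    0 < rationalCubic u v U V W Z θ := by
  obtain ⟨hθ₀, hθ₁⟩ := hθ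
  have h1θ : 0 ≤ 1 - θ := sub_nonneg.2 hθ₁
  have numerator_pos := binaryCubicForm_pos hU hV hW hZ h1θ hθ₀ (by simp)
  have denominator_pos : 0 < u + v * θ * (1 - θ) := by positivity
  exact div_pos numerator_pos denominator_pos

theorem stmt_5_general {N i : ℕ} {x y d : ℕ → K} {α u v U V W Z : K} {q : K → K}
    (hx : x 1 < x N) (hα₁ : α * y 1 < y i) (hαN : α * y N < y (i + 1)) (hu : 0 < u)
    (hv : max 0 (max
      (-u * (3 + ((x (i + 1) - x i) * d i - α * (x N - x 1) * d 1) / (y i - α * y 1)))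
      (-u * (3 + (-(x (i + 1) - x i) * d (i + 1) + α * (x N - x 1) * d N)
        / (y (i + 1) - α * y N)))) ≤ v)
    (hU : U = u * (y i - α * y 1))
    (hV : V = (3 * u + v) * (y i - α * y 1)
      + u * (x (i + 1) - x i) * d i - α * u * (x N - x 1) * d 1)
    (hW : W = (3 * u + v) * (y (i + 1) - α * y N)
      - u * (x (i + 1) - x i) * d (i + 1) + α * u * (x N - x 1) * d N)
    (hZ : Z = u * (y (i + 1) - α * y N))
    (hq : ∀ t, q t = rationalCubic u v U V W Z ((t - x 1) / (x N - x 1))) :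
    0 < U ∧ 0 < Z ∧ 0 ≤ V ∧ 0 ≤ W ∧ ∀ t ∈ Set.Icc (x 1) (x N), 0 < q t := by
  have left_pos : 0 < y i - α * y 1 := sub_pos.2 hα₁
  have right_pos : 0 < y (i + 1) - α * y N := sub_pos.2 hαN
  obtain ⟨v_nonneg, v_left, v_right⟩ : 0 ≤ v ∧ _ ≤ v ∧ _ ≤ v := by
    simpa only [max_le_iff] using hv
  have U_pos : 0 < U := hU ▸ mul_pos hu left_pos
  have Z_pos : 0 < Z := hZ ▸ mul_pos hu right_pos
  have V_nonneg : 0 ≤ V := by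
    linear_combination (neg_mul_add_div_le_iff left_pos _ 3 u v).1 v_left - hV
  have W_nonneg : 0 ≤ W := by
    linear_combination (neg_mul_add_div_le_iff right_pos _ 3 u v).1 v_right - hW
  refine ⟨U_pos, Z_pos, V_nonneg, W_nonneg, fun t ht ↦ ?_⟩
  rw [hq]
  exact rationalCubic_pos hu v_nonneg U_pos V_nonneg W_nonneg Z_pos
    (sub_div_sub_mem_Icc_zero_one hx ht)

end

/-- Under the positivity hypotheses on `αᵢ, uᵢ, vᵢ`, the Bernstein
coefficients satisfy `Uᵢ > 0`, `Zᵢ > 0`, `Vᵢ ≥ 0`, `Wᵢ ≥ 0`, and consequently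
`qᵢ(x) > 0` for all `x ∈ I`. -/
theorem stmt_5
    (N : ℕ) (hN : 2 < N)
    (x y d : ℕ → ℝ)
    (hx : ∀ i, 1 ≤ i → i < N → x i < x (i + 1))
    (hy : ∀ i, 1 ≤ i → i ≤ N → 0 < y i)
    (a : ℕ → ℝ) (ha : ∀ i, a i = (x (i + 1) - x i) / (x N - x 1))
    (α u v : ℕ → ℝ)
    (hα : ∀ i, 1 ≤ i → i < N →
      0 ≤ α i ∧ α i < min (a i) (min (y i / y 1) (y (i + 1) / y N)))
    (hu : ∀ i, 1 ≤ i → i < N → 0 < u i)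
    (hv : ∀ i, 1 ≤ i → i < N →
      max 0 (max
        (-(u i) * (3 + ((x (i + 1) - x i) * d i - α i * (x N - x 1) * d 1)
          / (y i - α i * y 1)))
        (-(u i) * (3 + (-(x (i + 1) - x i) * d (i + 1) + α i * (x N - x 1) * d N)
          / (y (i + 1) - α i * y N)))) ≤ v i)
    (U V W Z : ℕ → ℝ)
    (hU : ∀ i, U i = u i * (y i - α i * y 1))
    (hV : ∀ i, V i = (3 * u i + v i) * (y i - α i * y 1)
      + u i * (x (i + 1) - x i) * d i - α i * u i * (x N - x 1) * d 1)
    (hW : ∀ i, W i = (3 * u i + v i) * (y (i + 1) - α i * y N)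
      - u i * (x (i + 1) - x i) * d (i + 1) + α i * u i * (x N - x 1) * d N)
    (hZ : ∀ i, Z i = u i * (y (i + 1) - α i * y N))
    (q : ℕ → ℝ → ℝ)
    (hq : ∀ (i : ℕ) (t θ : ℝ), θ = (t - x 1) / (x N - x 1) →
      q i t = (U i * (1 - θ) ^ 3 + V i * θ * (1 - θ) ^ 2
        + W i * θ ^ 2 * (1 - θ) + Z i * θ ^ 3) / (u i + v i * θ * (1 - θ))) :
    ∀ i, 1 ≤ i → i < N →
      0 < U i ∧ 0 < Z i ∧ 0 ≤ V i ∧ 0 ≤ W i ∧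
      ∀ t ∈ Set.Icc (x 1) (x N), 0 < q i t := by
  intro i hi hiN
  have x_strictMonoOn : StrictMonoOn x (Set.Icc 1 N) :=
    strictMonoOn_of_lt_add_one Set.ordConnected_Icc fun k _ hk hk' ↦ hx k hk.1 hk'.2
  have h1N : 1 < N := by lia
  obtain ⟨-, -, hα₁, hαN⟩ : 0 ≤ α i ∧ α i < a i ∧ _ ∧ _ := by
    simpa only [lt_min_iff] using hα i hi hiN
  exact stmt_5_general
    (x_strictMonoOn (Set.left_mem_Icc.2 h1N.le) (Set.right_mem_Icc.2 h1N.le) h1N)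
    ((lt_div_iff₀ (hy 1 le_rfl h1N.le)).1 hα₁) ((lt_div_iff₀ (hy N h1N.le le_rfl)).1 hαN)
    (hu i hi hiN) (hv i hi hiN) (hU i) (hV i) (hW i) (hZ i) fun t ↦ hq i t _ rfl
end
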